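/- arXiv:1311.7049 — 2 statements merged into one kernel-verified Lean document; each statement's English description precedes it below -/
import Mathlib

section
/- Let X be a strictly stable random variable with parameters (ν, θ, τ). Then sign X and log|X| are integrable and E[sign X] = θ and E[log|X|] = τ. -/
open MeasureTheory ProbabilityTheory

/-- The real value of the Riemann zeta function at a real argument. -/
noncomputable def zetaR (s : ℝ) : ℝ := (riemannZeta (s : ℂ)).re

/-- A real random variable `X` is strictly stable with parameters `(ν, θ, τ)` if
`ν ≥ 1/4`, `|θ| ≤ min 1 (2√ν − 1)`, `P(X = 0) = 0`, `log |X|` has finite absolute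
moments of every order, and the characteristic function of `X` is
`E[exp(i k X)] = exp(−exp(ν^{−1/2}(log|k| + τ − i(π/2)θ sign k) + C(ν^{−1/2} − 1)))`
for all real `k ≠ 0`, where `C` is the Euler–Mascheroni constant. -/
def IsStrictlyStable {Ω : Type*} [MeasureSpace Ω] (X : Ω → ℝ) (ν θ τ : ℝ) : Prop :=
  Measurable X ∧ (1/4 : ℝ) ≤ ν ∧ |θ| ≤ min 1 (2 * Real.sqrt ν - 1) ∧
  (ℙ : Measure Ω) {ω | X ω = 0} = 0 ∧
  (∀ p : ℕ, Integrable (fun ω => (abs (Real.log (abs (X ω)))) ^ p)) ∧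
  ∀ k : ℝ, k ≠ 0 →
    (∫ ω, Complex.exp (Complex.I * (k : ℂ) * (X ω : ℂ))) =
      Complex.exp (-Complex.exp
        (((ν ^ (-(1/2) : ℝ) : ℝ) : ℂ) *
            (((Real.log |k| : ℝ) : ℂ) + (τ : ℂ) -
              Complex.I * ((Real.pi / 2 : ℝ) : ℂ) * (θ : ℂ) * ((Real.sign k : ℝ) : ℂ)) +
          ((Real.eulerMascheroniConstant : ℝ) : ℂ) * (((ν ^ (-(1/2) : ℝ) : ℝ) : ℂ) - 1)))


open Set Filter Topology

namespace SSaux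

lemma laplace_integrable {s r : ℝ} (hs : 0 < s) (hr : 0 < r) :
    IntegrableOn (fun t : ℝ => t ^ (s - 1) * Real.exp (-(r * t))) (Ioi 0) := by
  have := integrableOn_rpow_mul_exp_neg_mul_rpow (s := s - 1) (p := 1) (b := r)
    (by linarith) one_pos hr
  simpa using this

lemma laplace {s : ℝ} (hs : 0 < s) {r : ℂ} (hr : 0 < r.re) :
    ∫ t in Ioi (0:ℝ), ((t ^ (s - 1) : ℝ) : ℂ) * Complex.exp (-(r * t)) =
      Complex.exp (-(s * Complex.log r)) * Complex.Gamma s := by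
  let μ : Measure ℝ := (volume.restrict (Ioi (0:ℝ))).withDensity
    (fun t => ENNReal.ofReal (t ^ (s - 1)))
  have hm : Measurable (fun t : ℝ => ENNReal.ofReal (t ^ (s - 1))) := by fun_prop
  have hfin : ∀ᵐ t ∂(volume.restrict (Ioi (0:ℝ))), ENNReal.ofReal (t ^ (s - 1)) < ⊤ :=
    Eventually.of_forall fun t => ENNReal.ofReal_lt_top
  have hset : Ioi (0:ℝ) ⊆ interior (integrableExpSet (fun t : ℝ => -t) μ) := by
    apply interior_maximal _ isOpen_Ioi
    intro x hx
    show Integrable _ μ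
    rw [integrable_withDensity_iff hm hfin]
    refine (laplace_integrable hs hx).congr ?_
    filter_upwards [ae_restrict_mem measurableSet_Ioi] with t ht
    rw [ENNReal.toReal_ofReal (Real.rpow_nonneg (le_of_lt ht) _)]
    rw [mul_comm]; ring_nf
  have heq : ∀ z : ℂ, complexMGF (fun t : ℝ => -t) μ z =
      ∫ t in Ioi (0:ℝ), ((t ^ (s - 1) : ℝ) : ℂ) * Complex.exp (-(z * t)) := by
    intro z
    rw [complexMGF, integral_withDensity_eq_integral_toReal_smul hm hfin]
    refine setIntegral_congr_fun measurableSet_Ioi fun t ht => ?_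
    rw [ENNReal.toReal_ofReal (Real.rpow_nonneg (le_of_lt ht) _)]
    simp
  have hopen : IsOpen {z : ℂ | 0 < z.re} := isOpen_lt continuous_const Complex.continuous_re
  have h1 : AnalyticOnNhd ℂ (complexMGF (fun t : ℝ => -t) μ) {z : ℂ | 0 < z.re} :=
    analyticOnNhd_complexMGF.mono fun z hz => hset hz
  have h2 : AnalyticOnNhd ℂ (fun r : ℂ => Complex.exp (-(s * Complex.log r)) * Complex.Gamma s)
      {z : ℂ | 0 < z.re} := by
    apply DifferentiableOn.analyticOnNhd _ hopen
    intro z hz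
    have : z ∈ Complex.slitPlane := Or.inl hz
    apply DifferentiableAt.differentiableWithinAt
    have := Complex.differentiableAt_log this
    fun_prop
  have hpre : IsPreconnected {z : ℂ | 0 < z.re} :=
    (convex_halfSpace_re_gt 0).isPreconnected
  have key := h1.eqOn_of_preconnected_of_frequently_eq h2 hpre (z₀ := 1) (by simp) ?_
  · rw [← heq]; exact key hr
  · have ht : Tendsto (fun x : ℝ => (x : ℂ)) (𝓝[≠] 1) (𝓝[≠] 1) := by
      apply tendsto_nhdsWithin_of_tendsto_nhds_of_eventually_within
      · exact (Complex.continuous_ofReal.tendsto' 1 1 (by simp)).mono_left nhdsWithin_le_nhds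
      · filter_upwards [self_mem_nhdsWithin] with x hx
        simpa using hx
    apply ht.frequently
    apply Eventually.frequently
    filter_upwards [nhdsWithin_le_nhds (lt_mem_nhds one_pos)] with x hx
    rw [heq]
    have := Complex.integral_cpow_mul_exp_neg_mul_Ioi (a := s) (r := x) (by simpa) hx
    rw [Complex.cpow_def_of_ne_zero (by simp [hx.ne'])] at this
    rw [← Complex.ofReal_log hx.le]
    rw [show Complex.log (1 / (x:ℂ)) * s = -(s * (Real.log x : ℂ)) by
      rw [← Complex.ofReal_one, ← Complex.ofReal_div, ← Complex.ofReal_log (by positivity)]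
      simp; ring] at this
    rw [← this]
    refine setIntegral_congr_fun measurableSet_Ioi fun t ht => ?_
    rw [Complex.ofReal_cpow (le_of_lt ht)]
    simp

lemma laplace_rpow {s α : ℝ} (hs : 0 < s) (hα : 0 < α) {w : ℂ} (hw : 0 < w.re) :
    ∫ t in Ioi (0:ℝ), ((t ^ (s - 1) : ℝ) : ℂ) * Complex.exp (-(w * (t ^ α : ℝ))) =
      (1 / α) * (Complex.exp (-((s / α) * Complex.log w)) * Complex.Gamma (s / α)) := by
  have h := laplace (s := s / α) (by positivity) hw
  rw [← integral_comp_rpow_Ioi_of_pos hα] at h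
  push_cast at h
  rw [← h, ← integral_const_mul]
  refine setIntegral_congr_fun measurableSet_Ioi fun t ht => ?_
  have ht' : (0:ℝ) < t := ht
  simp only [Complex.real_smul]
  rw [← Real.rpow_mul ht'.le]
  have : t ^ (s - 1) = t ^ (α - 1) * t ^ (α * (s / α - 1)) := by
    rw [← Real.rpow_add ht']; congr 1; field_simp; ring
  rw [this]
  have : (α : ℂ) ≠ 0 := by exact_mod_cast hα.ne'
  push_cast
  field_simp

lemma fubini {Ω : Type*} [MeasureSpace Ω] [IsProbabilityMeasure (ℙ : Measure Ω)] {X : Ω → ℝ}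
    (hX : Measurable X) {s ε : ℝ} (hs : 0 < s) (hε : 0 < ε) :
    (∫ ω, Complex.exp (-(s * Complex.log (ε - Complex.I * X ω)))) * Complex.Gamma s =
    ∫ t in Ioi (0:ℝ), ((t ^ (s - 1) * Real.exp (-(ε * t)) : ℝ) : ℂ) *
      ∫ ω, Complex.exp (Complex.I * (t : ℂ) * (X ω : ℂ)) := by
  have e1 : ∀ ω, Complex.exp (-(s * Complex.log (ε - Complex.I * X ω))) * Complex.Gamma s =
      ∫ t in Ioi (0:ℝ), ((t ^ (s - 1) * Real.exp (-(ε * t)) : ℝ) : ℂ) *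
        Complex.exp (Complex.I * (t : ℂ) * (X ω : ℂ)) := by
    intro ω
    rw [← laplace hs (by simpa using hε)]
    refine setIntegral_congr_fun measurableSet_Ioi fun t ht => ?_
    push_cast
    rw [mul_assoc, ← Complex.exp_add]
    congr 2
    ring
  rw [← integral_mul_const]
  simp_rw [e1, ← integral_const_mul]
  apply integral_integral_swap
  have hi : Integrable (fun p : Ω × ℝ => (1:ℂ) * ((p.2 ^ (s - 1) * Real.exp (-(ε * p.2)) : ℝ) : ℂ))
      ((ℙ : Measure Ω).prod (volume.restrict (Ioi (0:ℝ)))) :=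
    Integrable.mul_prod (f := fun _ : Ω => (1:ℂ))
      (g := fun t : ℝ => ((t ^ (s - 1) * Real.exp (-(ε * t)) : ℝ) : ℂ))
      (integrable_const _) (laplace_integrable hs hε).ofReal
  refine hi.mono ?_ ?_
  · apply Measurable.aestronglyMeasurable
    unfold Function.uncurry
    fun_prop
  · refine Eventually.of_forall fun p => ?_
    simp only [Function.uncurry, one_mul, norm_mul]
    rw [show Complex.I * (p.2 : ℂ) * (X p.1 : ℂ) = ((p.2 * X p.1 : ℝ) : ℂ) * Complex.I by
      push_cast; ring, Complex.norm_exp_ofReal_mul_I, mul_one]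


section
variable {Ω : Type*} [MeasureSpace Ω] [IsProbabilityMeasure (ℙ : Measure Ω)] {X : Ω → ℝ}

lemma dom_integrable {s α b : ℝ} (hs : 0 < s) (hα : 0 < α) (hb : 0 < b) :
    IntegrableOn (fun t : ℝ => t ^ (s - 1) * Real.exp (-b * t ^ α)) (Ioi 0) :=
  integrableOn_rpow_mul_exp_neg_mul_rpow (by linarith) hα hb

lemma norm_dom {s α ε t : ℝ} {w : ℂ} (ht : 0 < t) (hε : 0 < ε) :
    ‖((t ^ (s - 1) * Real.exp (-(ε * t)) : ℝ) : ℂ) * Complex.exp (-(w * (t ^ α : ℝ)))‖ ≤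
      t ^ (s - 1) * Real.exp (-w.re * t ^ α) := by
  rw [norm_mul, Complex.norm_real, Complex.norm_exp, Real.norm_of_nonneg (by positivity)]
  have : (-(w * ((t ^ α : ℝ) : ℂ))).re = -w.re * t ^ α := by
    simp [Complex.mul_re]
  rw [this]
  gcongr
  have : Real.exp (-(ε * t)) ≤ 1 := Real.exp_le_one_iff.2 (by nlinarith [mul_pos hε ht])
  exact mul_le_of_le_one_right (by positivity) this

lemma rhs_tendsto {s α : ℝ} {w : ℂ} (hs : 0 < s) (hα : 0 < α) (hw : 0 < w.re) :
    Tendsto (fun ε : ℝ => ∫ t in Ioi (0:ℝ), ((t ^ (s - 1) * Real.exp (-(ε * t)) : ℝ) : ℂ) *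
      Complex.exp (-(w * (t ^ α : ℝ)))) (𝓝[>] 0)
      (𝓝 (∫ t in Ioi (0:ℝ), ((t ^ (s - 1) : ℝ) : ℂ) * Complex.exp (-(w * (t ^ α : ℝ))))) := by
  apply tendsto_integral_filter_of_dominated_convergence _ _ _ (dom_integrable hs hα hw)
  · refine Eventually.of_forall fun t => ?_
    have : Continuous fun ε : ℝ => ((t ^ (s - 1) * Real.exp (-(ε * t)) : ℝ) : ℂ) *
      Complex.exp (-(w * (t ^ α : ℝ))) := by fun_prop
    exact (this.tendsto' 0 _ (by simp)).mono_left nhdsWithin_le_nhds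
  · refine Eventually.of_forall fun ε => ?_
    apply Measurable.aestronglyMeasurable
    fun_prop
  · filter_upwards [self_mem_nhdsWithin] with ε hε
    filter_upwards [ae_restrict_mem measurableSet_Ioi] with t ht
    exact norm_dom ht hε

lemma norm_exp_log (s : ℝ) (z : ℂ) :
    ‖Complex.exp (-(s * Complex.log z))‖ = Real.exp (-(s * Real.log ‖z‖)) := by
  rw [Complex.norm_exp]; simp [Complex.log_re]

lemma le_norm_z (ε x : ℝ) : |x| ≤ ‖(ε - Complex.I * x : ℂ)‖ := by
  have := Complex.abs_im_le_norm (ε - Complex.I * x : ℂ)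
  simpa using this

lemma le_norm_z' {ε x : ℝ} (hε : 0 < ε) : ε ≤ ‖(ε - Complex.I * x : ℂ)‖ := by
  have := Complex.abs_re_le_norm (ε - Complex.I * x : ℂ)
  simpa [abs_of_pos hε] using this

lemma meas_f (hX : Measurable X) (s ε : ℝ) :
    Measurable fun ω => Complex.exp (-(s * Complex.log (ε - Complex.I * X ω))) := by
  fun_prop

lemma int_f (hX : Measurable X) {s ε : ℝ} (hs : 0 < s) (hε : 0 < ε) :
    Integrable fun ω => Complex.exp (-(s * Complex.log (ε - Complex.I * X ω))) := by
  apply Integrable.of_bound (meas_f hX s ε).aestronglyMeasurable (Real.exp (-(s * Real.log ε)))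
  refine Eventually.of_forall fun ω => ?_
  rw [norm_exp_log]
  gcongr
  exact le_norm_z' hε

lemma half_norm_le {z : ℂ} (hz : 0 ≤ z.re) {s : ℝ} (hs : 0 < s) (hs2 : s ≤ 1/2) :
    ‖Complex.exp (-(s * Complex.log z))‖ ≤ 2 * (Complex.exp (-(s * Complex.log z))).re := by
  rw [norm_exp_log, Complex.exp_re]
  have h1 : (-(s * Complex.log z)).re = -(s * Real.log ‖z‖) := by simp [Complex.log_re]
  have h2 : (-(s * Complex.log z)).im = -(s * z.arg) := by simp [Complex.log_im]
  rw [h1, h2, Real.cos_neg]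
  have h3 : |z.arg| ≤ Real.pi / 2 := Complex.abs_arg_le_pi_div_two_iff.2 hz
  have h4 : 1 / 2 ≤ Real.cos (s * z.arg) := by
    rw [← Real.cos_abs, ← Real.cos_pi_div_three]
    have : |s * z.arg| ≤ Real.pi / 3 := by
      rw [abs_mul, abs_of_pos hs]
      nlinarith [abs_nonneg z.arg, Real.pi_pos]
    exact Real.cos_le_cos_of_nonneg_of_le_pi (abs_nonneg _) (by linarith [Real.pi_pos]) this
  nlinarith [Real.exp_pos (-(s * Real.log ‖z‖))]

lemma half_bound (hX : Measurable X) {s α ε : ℝ} {w : ℂ}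
    (hs : 0 < s) (hs2 : s ≤ 1/2) (hα : 0 < α) (hw : 0 < w.re) (hε : 0 < ε)
    (hφ : ∀ t : ℝ, 0 < t → ∫ ω, Complex.exp (Complex.I * (t : ℂ) * (X ω : ℂ)) =
      Complex.exp (-(w * (t ^ α : ℝ)))) :
    ∫ ω, ‖Complex.exp (-(s * Complex.log (ε - Complex.I * X ω)))‖ ≤
      2 * ((∫ t in Ioi (0:ℝ), t ^ (s - 1) * Real.exp (-w.re * t ^ α)) / ‖Complex.Gamma s‖) := by
  have hi := int_f hX hs hε
  calc _ ≤ ∫ ω, 2 * (Complex.exp (-(s * Complex.log (ε - Complex.I * X ω)))).re := by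
        apply integral_mono hi.norm (hi.re.const_mul 2)
        intro ω
        exact half_norm_le (by simpa using hε.le) hs hs2
    _ = 2 * (∫ ω, Complex.exp (-(s * Complex.log (ε - Complex.I * X ω)))).re := by
        rw [integral_const_mul]
        congr 1
        exact integral_re hi
    _ ≤ _ := by
        gcongr
        have hG : Complex.Gamma s ≠ 0 := Complex.Gamma_ne_zero_of_re_pos (by simpa)
        refine (Complex.re_le_norm _).trans ?_
        rw [le_div_iff₀ (norm_pos_iff.2 hG), ← norm_mul, fubini hX hs hε]
        rw [setIntegral_congr_fun (g := fun t : ℝ =>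
          ((t ^ (s - 1) * Real.exp (-(ε * t)) : ℝ) : ℂ) * Complex.exp (-(w * (t ^ α : ℝ))))
          measurableSet_Ioi fun t ht => by simp only [hφ t ht]]
        apply norm_integral_le_of_norm_le (dom_integrable hs hα hw)
        filter_upwards [ae_restrict_mem measurableSet_Ioi] with t ht
        exact norm_dom ht hε

lemma log_tendsto {x : ℝ} (hx : x ≠ 0) :
    Tendsto (fun ε : ℝ => Complex.log (ε - Complex.I * x)) (𝓝[>] 0)
      (𝓝 (Complex.log (-(Complex.I * x)))) := by
  have h : -(Complex.I * x) ∈ Complex.slitPlane := by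
    right; simpa using hx
  have h2 : Tendsto (fun ε : ℝ => (ε - Complex.I * x : ℂ)) (𝓝[>] 0) (𝓝 (-(Complex.I * x))) := by
    have : Continuous (fun ε : ℝ => (ε - Complex.I * x : ℂ)) := by fun_prop
    exact (this.tendsto' 0 _ (by simp)).mono_left nhdsWithin_le_nhds
  exact (continuousAt_clog h).tendsto.comp h2

lemma f_tendsto (s : ℝ) {x : ℝ} (hx : x ≠ 0) :
    Tendsto (fun ε : ℝ => Complex.exp (-(s * Complex.log (ε - Complex.I * x)))) (𝓝[>] 0)
      (𝓝 (Complex.exp (-(s * Complex.log (-(Complex.I * x)))))) :=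
  (((log_tendsto hx).const_mul _).neg).cexp

lemma half_integrable (hX : Measurable X) (hX0 : ∀ᵐ ω, X ω ≠ 0) {α : ℝ} {w : ℂ}
    (hα : 0 < α) (hw : 0 < w.re)
    (hφ : ∀ t : ℝ, 0 < t → ∫ ω, Complex.exp (Complex.I * (t : ℂ) * (X ω : ℂ)) =
      Complex.exp (-(w * (t ^ α : ℝ)))) :
    Integrable fun ω => Real.exp (-((1/2) * Real.log |X ω|)) := by
  have hs : (0:ℝ) < 1/2 := by norm_num
  let F : ℝ → Ω → ℂ := fun ε ω => Complex.exp (-((1/2 : ℝ) * Complex.log (ε - Complex.I * X ω)))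
  have hF : Integrable fun ω => Complex.exp (-((1/2:ℝ) * Complex.log (-(Complex.I * X ω)))) := by
    refine ⟨by apply Measurable.aestronglyMeasurable; fun_prop, ?_⟩
    unfold HasFiniteIntegral
    rw [lintegral_congr_ae (g := fun ω => liminf (fun ε => ‖F ε ω‖ₑ) (𝓝[>] 0))]
    · refine (lintegral_liminf_le fun ε => (meas_f hX (1/2) ε).enorm).trans_lt ?_
      refine lt_of_le_of_lt ?_ (ENNReal.ofReal_lt_top (r := 2 * ((∫ t in Ioi (0:ℝ),
        t ^ ((1/2:ℝ) - 1) * Real.exp (-w.re * t ^ α)) / ‖Complex.Gamma (1/2:ℝ)‖)))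
      apply liminf_le_of_frequently_le'
      apply Eventually.frequently
      filter_upwards [self_mem_nhdsWithin] with ε hε
      have hi := int_f hX hs hε
      rw [← ofReal_integral_norm_eq_lintegral_enorm hi]
      exact ENNReal.ofReal_le_ofReal (half_bound hX hs le_rfl hα hw hε hφ)
    · filter_upwards [hX0] with ω hω
      exact ((f_tendsto (1/2) hω).enorm.liminf_eq).symm
  refine hF.norm.congr (Eventually.of_forall fun ω => ?_)
  simp only
  rw [norm_exp_log]
  simp

lemma exp_le_one_add {s y : ℝ} (hs : 0 ≤ s) {q : ℝ} (hs2 : s ≤ q) :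
    Real.exp (-(s * y)) ≤ 1 + Real.exp (-(q * y)) := by
  rcases le_total 0 y with h | h
  · have : Real.exp (-(s * y)) ≤ 1 := Real.exp_le_one_iff.2 (by nlinarith)
    linarith [Real.exp_pos (-(q * y))]
  · have : Real.exp (-(s * y)) ≤ Real.exp (-(q * y)) := Real.exp_le_exp.2 (by nlinarith)
    linarith

lemma mellin_eq (hX : Measurable X) (hX0 : ∀ᵐ ω, X ω ≠ 0) {α : ℝ} {w : ℂ}
    (hα : 0 < α) (hw : 0 < w.re)
    (hφ : ∀ t : ℝ, 0 < t → ∫ ω, Complex.exp (Complex.I * (t : ℂ) * (X ω : ℂ)) =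
      Complex.exp (-(w * (t ^ α : ℝ)))) {s : ℝ} (hs : 0 < s) (hs2 : s ≤ 1/2) :
    ∫ ω, Complex.exp (-(s * Complex.log (-(Complex.I * X ω)))) =
      Complex.exp (-((s / α) * Complex.log w)) * Complex.Gamma (1 + s / α) /
        Complex.Gamma (1 + s) := by
  have h1 : Tendsto (fun ε : ℝ => ∫ ω, Complex.exp (-(s * Complex.log (ε - Complex.I * X ω))))
      (𝓝[>] 0) (𝓝 (∫ ω, Complex.exp (-(s * Complex.log (-(Complex.I * X ω)))))) := by
    apply tendsto_integral_filter_of_dominated_convergence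
      (fun ω => 1 + Real.exp (-((1/2) * Real.log |X ω|)))
    · exact Eventually.of_forall fun ε => (meas_f hX s ε).aestronglyMeasurable
    · filter_upwards [self_mem_nhdsWithin] with ε hε
      filter_upwards [hX0] with ω hω
      rw [norm_exp_log]
      refine le_trans ?_ (exp_le_one_add hs.le hs2)
      have : 0 < |X ω| := abs_pos.2 hω
      gcongr
      exact le_norm_z _ _
    · exact (integrable_const _).add (half_integrable hX hX0 hα hw hφ)
    · filter_upwards [hX0] with ω hω
      exact f_tendsto s hω
  have h2 := rhs_tendsto (s := s) hs hα hw
  have h3 := h1.mul_const (Complex.Gamma s)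
  have h4 := tendsto_nhds_unique (h3.congr' ?_) h2
  · rw [laplace_rpow hs hα hw] at h4
    have hG : Complex.Gamma s ≠ 0 := Complex.Gamma_ne_zero_of_re_pos (by simpa)
    have hs' : (s : ℂ) ≠ 0 := by exact_mod_cast hs.ne'
    have hα' : (α : ℂ) ≠ 0 := by exact_mod_cast hα.ne'
    rw [add_comm 1 (s:ℂ), add_comm 1 ((s:ℂ) / α), Complex.Gamma_add_one _ hs',
      Complex.Gamma_add_one _ (div_ne_zero hs' hα')]
    rw [eq_div_iff (mul_ne_zero hs' hG)]
    calc _ = s * ((∫ ω, Complex.exp (-(s * Complex.log (-(Complex.I * X ω))))) *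
          Complex.Gamma s) := by ring
      _ = _ := by rw [h4]; ring
  · filter_upwards [self_mem_nhdsWithin] with ε hε
    rw [fubini hX hs hε]
    exact setIntegral_congr_fun measurableSet_Ioi fun t ht => by simp only [hφ t ht]

end

lemma norm_exp_sub_one_le' (u : ℂ) : ‖Complex.exp u - 1‖ ≤ (1 + Real.exp u.re) * ‖u‖ := by
  have hc : Convex ℝ {z : ℂ | z.re ≤ max 0 u.re} := convex_halfSpace_re_le _
  have h := hc.norm_image_sub_le_of_norm_hasDerivWithin_le (f := Complex.exp) (f' := Complex.exp)
    (C := Real.exp (max 0 u.re)) (x := 0) (y := u)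
    (fun z _ => (Complex.hasDerivAt_exp z).hasDerivWithinAt)
    (fun z hz => by rw [Complex.norm_exp]; exact Real.exp_le_exp.2 hz) (by simp) (by simp)
  rw [Complex.exp_zero, sub_zero] at h
  refine h.trans ?_
  gcongr
  rcases max_cases 0 u.re with ⟨h, _⟩ | ⟨h, _⟩ <;> rw [h]
  · simp [Real.exp_pos _ |>.le]
  · linarith

lemma rhs_deriv {α : ℝ} (hα : 0 < α) (l : ℂ) :
    HasDerivAt (fun s : ℝ => Complex.exp (-((s / α) * l)) * Complex.Gamma (1 + s / α) /
        Complex.Gamma (1 + s))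
      (-(l / α) - Real.eulerMascheroniConstant / α + Real.eulerMascheroniConstant) 0 := by
  have key : HasDerivAt (fun s : ℂ => Complex.exp (-((s / α) * l)) * Complex.Gamma (1 + s / α) /
        Complex.Gamma (1 + s))
      (-(l / α) - Real.eulerMascheroniConstant / α + Real.eulerMascheroniConstant)
      ((0:ℝ):ℂ) := by
    have hg := Complex.hasDerivAt_Gamma_one
    have a1 : HasDerivAt (fun s : ℂ => Complex.exp (-((s / α) * l)))
        (Complex.exp (-(((0:ℝ) / α) * l)) * -((1 / α) * l)) ((0:ℝ):ℂ) :=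
      ((((hasDerivAt_id _).div_const _).mul_const _).neg).cexp
    have a2 : HasDerivAt (fun s : ℂ => Complex.Gamma (1 + s / α))
        (-Real.eulerMascheroniConstant * (1 / α)) ((0:ℝ):ℂ) := by
      have hg' : HasDerivAt Complex.Gamma (-Real.eulerMascheroniConstant)
          (1 + ((0:ℝ):ℂ) / α) := by simpa using hg
      have hh : HasDerivAt (fun s : ℂ => 1 + s / α) (1 / α) ((0:ℝ):ℂ) :=
        ((hasDerivAt_id _).div_const _).const_add _
      exact HasDerivAt.comp _ hg' hh
    have a3 : HasDerivAt (fun s : ℂ => Complex.Gamma (1 + s))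
        (-Real.eulerMascheroniConstant * 1) ((0:ℝ):ℂ) := by
      have hg' : HasDerivAt Complex.Gamma (-Real.eulerMascheroniConstant)
          (1 + ((0:ℝ):ℂ)) := by simpa using hg
      have hh : HasDerivAt (fun s : ℂ => 1 + s) 1 ((0:ℝ):ℂ) := (hasDerivAt_id _).const_add _
      exact HasDerivAt.comp _ hg' hh
    refine ((a1.mul a2).div a3 (by simp)).congr_deriv ?_
    simp
    ring
  exact key.comp_ofReal

lemma mean_clog {Ω : Type*} [MeasureSpace Ω] [IsProbabilityMeasure (ℙ : Measure Ω)] {X : Ω → ℝ}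
    (hX : Measurable X) (hX0 : ∀ᵐ ω, X ω ≠ 0) {α : ℝ} {w : ℂ}
    (hα : 0 < α) (hw : 0 < w.re)
    (hφ : ∀ t : ℝ, 0 < t → ∫ ω, Complex.exp (Complex.I * (t : ℂ) * (X ω : ℂ)) =
      Complex.exp (-(w * (t ^ α : ℝ))))
    (hlog : Integrable (fun ω => (abs (Real.log (abs (X ω)))) ^ 2)) :
    ∫ ω, Complex.log (-(Complex.I * X ω)) =
      Complex.log w / α + Real.eulerMascheroniConstant / α - Real.eulerMascheroniConstant := by
  have hhalf := half_integrable hX hX0 hα hw hφ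
  have h1 : Tendsto (fun s : ℝ => ∫ ω, s⁻¹ •
      (Complex.exp (-(s * Complex.log (-(Complex.I * X ω)))) - 1)) (𝓝[>] 0)
      (𝓝 (∫ ω, -Complex.log (-(Complex.I * X ω)))) := by
    apply tendsto_integral_filter_of_dominated_convergence
      (fun ω => (abs (Real.log (abs (X ω)))) ^ 2 + (Real.pi ^ 2 + 4) +
        Real.exp (-((1/2) * Real.log |X ω|)))
    · refine Eventually.of_forall fun s => ?_
      apply Measurable.aestronglyMeasurable
      fun_prop
    · filter_upwards [Ioc_mem_nhdsGT (show (0:ℝ) < 1/4 by norm_num)] with s hs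
      refine Eventually.of_forall fun ω => ?_
      set L := Complex.log (-(Complex.I * X ω)) with hL
      have hre : L.re = Real.log |X ω| := by rw [hL, Complex.log_re]; simp
      have hLn : ‖L‖ ≤ abs (Real.log (abs (X ω))) + Real.pi := by
        refine (Complex.norm_le_abs_re_add_abs_im L).trans ?_
        rw [hre]
        gcongr
        rw [hL, Complex.log_im]
        exact Complex.abs_arg_le_pi _
      rw [norm_smul, norm_inv, Real.norm_of_nonneg hs.1.le]
      have e1 := norm_exp_sub_one_le' (-(s * L))
      have e2 : (-(s * L)).re = -(s * Real.log |X ω|) := by simp [hre]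
      have e3 : ‖-(s * L)‖ = s * ‖L‖ := by simp [abs_of_pos hs.1]
      rw [e2, e3] at e1
      have e4 := exp_le_one_add (y := Real.log |X ω|) hs.1.le hs.2
      have e5 : s⁻¹ * ‖Complex.exp (-(s * L)) - 1‖ ≤
          (1 + Real.exp (-(s * Real.log |X ω|))) * ‖L‖ := by
        rw [inv_mul_le_iff₀ hs.1]; linarith
      have e6 : Real.exp (-((1/2) * Real.log |X ω|)) = Real.exp (-((1/4) * Real.log |X ω|)) ^ 2 := by
        rw [← Real.exp_nat_mul]; congr 1; push_cast; ring
      rw [e6]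
      set E := Real.exp (-((1/4) * Real.log |X ω|))
      set l := abs (Real.log (abs (X ω)))
      have hl : 0 ≤ l := abs_nonneg _
      have hE : 0 < E := Real.exp_pos _
      have e7 : (1 + Real.exp (-(s * Real.log |X ω|))) * ‖L‖ ≤ (2 + E) * (l + Real.pi) := by
        exact mul_le_mul (by linarith) hLn (norm_nonneg _) (by positivity)
      nlinarith [sq_nonneg (2 + E - (l + Real.pi)), sq_nonneg (2 - E), sq_nonneg (l - Real.pi)]
    · exact (hlog.add (integrable_const _)).add hhalf
    · refine Eventually.of_forall fun ω => ?_
      set L := Complex.log (-(Complex.I * X ω)) with hL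
      have hd : HasDerivAt (fun s : ℝ => Complex.exp (-(s * L))) (-L) 0 := by
        have : HasDerivAt (fun s : ℂ => Complex.exp (-(s * L)))
          (Complex.exp (-(((0:ℝ):ℂ) * L)) * -(1 * L)) ((0:ℝ):ℂ) :=
          (((hasDerivAt_id _).mul_const _).neg).cexp
        simpa using this.comp_ofReal
      simpa using hd.tendsto_slope_zero_right
  have h2 := (rhs_deriv hα (Complex.log w)).tendsto_slope_zero_right
  have h3 := tendsto_nhds_unique (h1.congr' ?_) h2
  · rw [integral_neg] at h3
    linear_combination -h3
  · filter_upwards [Ioc_mem_nhdsGT (show (0:ℝ) < 1/2 by norm_num)] with s hs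
    rw [integral_smul, integral_sub _ (integrable_const _), mellin_eq hX hX0 hα hw hφ hs.1 hs.2]
    · simp
    · refine Integrable.mono' ((integrable_const (1:ℝ)).add hhalf)
        (by apply Measurable.aestronglyMeasurable; fun_prop) ?_
      refine Eventually.of_forall fun ω => ?_
      rw [norm_exp_log]
      have := exp_le_one_add (y := Real.log |X ω|) hs.1.le hs.2
      simpa using this

lemma clog_eq {x : ℝ} (hx : x ≠ 0) : Complex.log (-(Complex.I * x)) =
    (Real.log |x| : ℝ) - Complex.I * ((Real.pi / 2 * Real.sign x : ℝ) : ℂ) := by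
  apply Complex.ext
  · rw [Complex.log_re]; simp
  · rw [Complex.log_im]
    rcases hx.lt_or_gt with h | h
    · rw [show -(Complex.I * x) = ((-x : ℝ) : ℂ) * Complex.I by push_cast; ring,
        Complex.arg_real_mul _ (by linarith), Complex.arg_I, Real.sign_of_neg h]
      simp
    · rw [show -(Complex.I * x) = (x : ℂ) * (-Complex.I) by ring,
        Complex.arg_real_mul _ h, Complex.arg_neg_I, Real.sign_of_pos h]
      simp

lemma meas_sign : Measurable Real.sign := by
  unfold Real.sign
  exact Measurable.ite measurableSet_Iio measurable_const
    (Measurable.ite measurableSet_Ioi measurable_const measurable_const)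

lemma degenerate {Ω : Type*} [MeasureSpace Ω] [IsProbabilityMeasure (ℙ : Measure Ω)] {X : Ω → ℝ}
    (hX : Measurable X) (c : ℝ)
    (hφ : ∀ k : ℝ, k ≠ 0 → ∫ ω, Complex.exp (Complex.I * (k : ℂ) * (X ω : ℂ)) =
      Complex.exp (Complex.I * k * c)) : ∀ᵐ ω, X ω = c := by
  have : Measure.map X (ℙ : Measure Ω) = Measure.dirac c := by
    have := Measure.isProbabilityMeasure_map (μ := (ℙ : Measure Ω)) hX.aemeasurable
    apply Measure.ext_of_charFun
    ext k
    rw [charFun_dirac, charFun_apply_real,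
      integral_map hX.aemeasurable (by apply Measurable.aestronglyMeasurable; fun_prop)]
    by_cases hk : k = 0
    · simp [hk]
    · have := hφ k hk
      simp only [show ∀ x : ℝ, (k : ℂ) * x * Complex.I = Complex.I * k * x from fun x => by ring]
      rw [this]
      congr 1
      simp
      ring
  have h2 : ∀ᵐ x ∂(Measure.map X (ℙ : Measure Ω)), x = c := by
    rw [this, ae_dirac_eq]; simp
  exact ae_of_ae_map hX.aemeasurable h2

end SSaux

theorem mean_sign_and_log_of_strictlyStable {Ω : Type*} [MeasureSpace Ω]
    [IsProbabilityMeasure (ℙ : Measure Ω)] (X : Ω → ℝ) (ν θ τ : ℝ)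
    (hX : IsStrictlyStable X ν θ τ) :
    Integrable (fun ω => Real.sign (X ω)) ∧ Integrable (fun ω => Real.log |X ω|) ∧
    (∫ ω, Real.sign (X ω)) = θ ∧ (∫ ω, Real.log |X ω|) = τ := by
  obtain ⟨hm, hν, hθ, hX0, hlog, hφ⟩ := hX
  have hX0' : ∀ᵐ ω, X ω ≠ 0 := by
    rw [ae_iff]; simpa using hX0
  have hsI : Integrable (fun ω => Real.sign (X ω)) := by
    apply Integrable.of_bound (SSaux.meas_sign.comp hm).aestronglyMeasurable 1
    refine Eventually.of_forall fun ω => ?_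
    rcases Real.sign_apply_eq (X ω) with h | h | h <;> simp [h]
  have hlI : Integrable (fun ω => Real.log |X ω|) := by
    have := hlog 1
    simp only [pow_one] at this
    exact this.mono (by apply Measurable.aestronglyMeasurable; fun_prop) (by simp)
  refine ⟨hsI, hlI, ?_⟩
  have hν0 : 0 < ν := by linarith
  set α : ℝ := ν ^ (-(1/2) : ℝ) with hαdef
  have hα : 0 < α := by positivity
  have hsq : Real.sqrt ν = 1 / α := by
    rw [Real.sqrt_eq_rpow, hαdef, Real.rpow_neg hν0.le]; simp
  rw [hsq] at hθ
  have hθ1 : |θ| ≤ 1 := hθ.trans (min_le_left _ _)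
  have hθ2 : α * |θ| ≤ 2 - α := by
    have := mul_le_mul_of_nonneg_left (hθ.trans (min_le_right _ _)) hα.le
    have e : α * (2 * (1 / α) - 1) = 2 - α := by field_simp
    linarith
  have hθ3 : α * |θ| ≤ α := by nlinarith
  set γ := Real.eulerMascheroniConstant with hγ
  by_cases hdeg : α * |θ| = 1
  · have hα1 : α = 1 := by linarith
    have hθa : |θ| = 1 := by rw [hα1, one_mul] at hdeg; exact hdeg
    have hX' : ∀ᵐ ω, X ω = θ * Real.exp τ := by
      apply SSaux.degenerate hm
      intro k hk
      rw [hφ k hk, hα1]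
      congr 1
      have hkk : |k| = k * Real.sign k := by
        rcases hk.lt_or_gt with h | h
        · rw [Real.sign_of_neg h, abs_of_neg h]; ring
        · rw [Real.sign_of_pos h, abs_of_pos h]; ring
      have e : Complex.exp (-(Complex.I * ((Real.pi / 2 : ℝ) : ℂ) * θ * (Real.sign k : ℝ))) =
          -(Complex.I * θ * (Real.sign k : ℝ)) := by
        have hp : Complex.exp (-(Complex.I * (Real.pi / 2 : ℝ))) = -Complex.I := by
          rw [show -(Complex.I * ((Real.pi / 2 : ℝ):ℂ)) = -(Real.pi:ℂ) / 2 * Complex.I by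
            push_cast; ring]
          exact Complex.exp_neg_pi_div_two_mul_I
        have hp' : Complex.exp (Complex.I * (Real.pi / 2 : ℝ)) = Complex.I := by
          rw [show (Complex.I * ((Real.pi / 2 : ℝ):ℂ)) = (Real.pi:ℂ) / 2 * Complex.I by
            push_cast; ring]
          exact Complex.exp_pi_div_two_mul_I
        have hs1 : Real.sign k = -1 ∨ Real.sign k = 1 := by
          rcases hk.lt_or_gt with h' | h'
          · exact Or.inl (Real.sign_of_neg h')
          · exact Or.inr (Real.sign_of_pos h')
        rcases (abs_eq zero_le_one).1 hθa with h | h <;>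
          rcases hs1 with h' | h' <;> rw [h'] <;>
          simp only [h, Complex.ofReal_neg,
            Complex.ofReal_one, mul_one, mul_neg, neg_neg, hp, hp']
      rw [show ((1:ℝ):ℂ) * (((Real.log |k| : ℝ) : ℂ) + (τ : ℂ) -
              Complex.I * ((Real.pi / 2 : ℝ) : ℂ) * (θ : ℂ) * ((Real.sign k : ℝ) : ℂ)) +
          ((γ : ℝ) : ℂ) * (((1 : ℝ) : ℂ) - 1) = ((Real.log |k| : ℝ) : ℂ) + (τ : ℂ) +
          (-(Complex.I * ((Real.pi / 2 : ℝ) : ℂ) * (θ : ℂ) * ((Real.sign k : ℝ) : ℂ))) by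
          push_cast; ring]
      rw [Complex.exp_add, Complex.exp_add, e, ← Complex.ofReal_exp, Real.exp_log (abs_pos.2 hk),
        hkk]
      have hss : (Real.sign k : ℂ) * (Real.sign k : ℂ) = 1 := by
        rcases hk.lt_or_gt with h' | h' <;> simp [Real.sign_of_neg, Real.sign_of_pos, h']
      push_cast
      linear_combination (Complex.I * θ * k * Complex.exp τ) * hss
    constructor
    · rw [integral_congr_ae (g := fun _ => θ)]
      · simp
      · filter_upwards [hX'] with ω hω
        rw [hω]
        have := Real.exp_pos τ
        rcases (abs_eq zero_le_one).1 hθa with h | h <;> rw [h]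
        · rw [one_mul, Real.sign_of_pos this]
        · rw [Real.sign_of_neg (by linarith)]
    · rw [integral_congr_ae (g := fun _ => τ)]
      · simp
      · filter_upwards [hX'] with ω hω
        rw [hω, abs_mul, hθa, one_mul, Real.abs_exp, Real.log_exp]
  · have hlt : α * |θ| < 1 := lt_of_le_of_ne (by linarith) hdeg
    set b : ℂ := ((α * τ + γ * (α - 1) : ℝ) : ℂ) +
      ((-(α * θ * (Real.pi / 2)) : ℝ) : ℂ) * Complex.I with hb
    have hbre : b.re = α * τ + γ * (α - 1) := by simp [hb]
    have hbim : b.im = -(α * θ * (Real.pi / 2)) := by simp [hb]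
    have habs : |α * θ * (Real.pi / 2)| < Real.pi / 2 := by
      rw [abs_mul, abs_mul, abs_of_pos hα, abs_of_pos Real.pi_div_two_pos]
      have := Real.pi_div_two_pos
      nlinarith
    obtain ⟨hab1, hab2⟩ := abs_lt.1 habs
    have hw : 0 < (Complex.exp b).re := by
      rw [Complex.exp_re, hbim, Real.cos_neg]
      exact mul_pos (Real.exp_pos _) (Real.cos_pos_of_mem_Ioo ⟨hab1, hab2⟩)
    have hlogw : Complex.log (Complex.exp b) = b := by
      apply Complex.log_exp <;> rw [hbim] <;> linarith [Real.pi_pos]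
    have hφ' : ∀ t : ℝ, 0 < t → ∫ ω, Complex.exp (Complex.I * (t : ℂ) * (X ω : ℂ)) =
      Complex.exp (-(Complex.exp b * (t ^ α : ℝ))) := by
      intro t ht
      rw [hφ t ht.ne', Real.rpow_def_of_pos ht, Complex.ofReal_exp, ← Complex.exp_add,
        abs_of_pos ht, Real.sign_of_pos ht, hb]
      congr 3
      push_cast
      ring
    have key := SSaux.mean_clog hm hX0' hα hw hφ' (hlog 2)
    rw [hlogw] at key
    have hα' : (α : ℂ) ≠ 0 := by exact_mod_cast hα.ne'
    have hR : b / α + γ / α - γ = (τ : ℂ) - Complex.I * ((Real.pi / 2 * θ : ℝ) : ℂ) := by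
      rw [hb]; push_cast; field_simp; ring
    rw [hR, integral_congr_ae (g := fun ω => ((Real.log |X ω| : ℝ) : ℂ) -
        Complex.I * ((Real.pi / 2 * Real.sign (X ω) : ℝ) : ℂ))
        (by filter_upwards [hX0'] with ω hω using SSaux.clog_eq hω),
      integral_sub hlI.ofReal ((hsI.const_mul (Real.pi/2)).ofReal.const_mul _),
      integral_const_mul, integral_complex_ofReal, integral_complex_ofReal, integral_const_mul] at key
    have k1 := congrArg Complex.re key
    have k2 := congrArg Complex.im key
    simp at k1 k2
    refine ⟨?_, by simpa using k1⟩
    have := Real.pi_pos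
    first
      | exact k2
      | (rcases k2 with h | h
         · exact h
         · exact absurd h Real.pi_ne_zero)
end

section
/- Let X be a strictly stable random variable with parameters (ν, θ, τ). Then E[(log|X|)²] = τ² + DV, where DV = (π²/4)(1 − θ²) + (π²/6)(ν − 1). Equivalently, the variance of log|X| equals DV. -/
open MeasureTheory ProbabilityTheory

open Set Filter Topology

lemma aux_gammaC {s : ℝ} (hs : 0 < s) {r : ℂ} (hr : 0 < r.re) :
    ∫ t in Ioi (0:ℝ), ((t ^ (s-1) : ℝ) : ℂ) * Complex.exp (-(r * t)) =
      r ^ (-(s:ℂ)) * (Real.Gamma s : ℂ) := by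
  set μ : Measure ℝ := (volume.restrict (Ioi (0:ℝ))).withDensity
    (fun t => ENNReal.ofReal (t ^ (s-1))) with hμ
  have hmeas : Measurable (fun t : ℝ => ENNReal.ofReal (t ^ (s-1))) := by fun_prop
  have hint : ∀ z : ℂ, complexMGF (fun t : ℝ => -t) μ z =
      ∫ t in Ioi (0:ℝ), ((t ^ (s-1) : ℝ) : ℂ) * Complex.exp (-(z * t)) := by
    intro z
    rw [complexMGF, hμ, integral_withDensity_eq_integral_toReal_smul hmeas (by simp)]
    refine setIntegral_congr_fun measurableSet_Ioi (fun t ht => ?_)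
    have : 0 ≤ t ^ (s-1) := Real.rpow_nonneg (le_of_lt ht) _
    simp [ENNReal.toReal_ofReal this]
  have hset : Ioi (0:ℝ) ⊆ integrableExpSet (fun t : ℝ => -t) μ := by
    intro x hx
    rw [integrableExpSet, mem_ofPred_eq, hμ, integrable_withDensity_iff_integrable_smul' hmeas (by simp)]
    have h := integrableOn_rpow_mul_exp_neg_mul_rpow (p := 1) (s := s - 1) (b := x) (by linarith) one_pos hx
    refine h.congr_fun (fun t ht => ?_) measurableSet_Ioi
    have : 0 ≤ t ^ (s-1) := Real.rpow_nonneg (le_of_lt ht) _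
    simp [ENNReal.toReal_ofReal this]
  have hint2 : Ioi (0:ℝ) ⊆ interior (integrableExpSet (fun t : ℝ => -t) μ) :=
    interior_maximal hset isOpen_Ioi
  have hpre : IsPreconnected {z : ℂ | 0 < z.re} := (convex_halfSpace_re_gt 0).isPreconnected
  have hopen : IsOpen {z : ℂ | 0 < z.re} := isOpen_lt continuous_const Complex.continuous_re
  have hA : AnalyticOnNhd ℂ (complexMGF (fun t : ℝ => -t) μ) {z : ℂ | 0 < z.re} :=
    analyticOnNhd_complexMGF.mono (fun z hz => hint2 hz)
  have hB : AnalyticOnNhd ℂ (fun r : ℂ => r ^ (-(s:ℂ)) * (Real.Gamma s : ℂ)) {z : ℂ | 0 < z.re} := by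
    refine DifferentiableOn.analyticOnNhd (fun z hz => ?_) hopen
    have : z ∈ Complex.slitPlane := Or.inl hz
    exact ((differentiableAt_id.cpow_const this).mul_const _).differentiableWithinAt
  have hreal : ∀ x : ℝ, 0 < x → complexMGF (fun t : ℝ => -t) μ x =
      (x:ℂ) ^ (-(s:ℂ)) * (Real.Gamma s : ℂ) := by
    intro x hx
    rw [hint]
    have h := Real.integral_rpow_mul_exp_neg_mul_Ioi hs hx
    have h2 : (((∫ t in Ioi (0:ℝ), t ^ (s-1) * Real.exp (-(x*t)) : ℝ)) : ℂ) =
      (((1/x) ^ s * Real.Gamma s : ℝ) : ℂ) := by rw [h]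
    rw [← integral_complex_ofReal] at h2
    have e : (((1/x) ^ s : ℝ) : ℂ) = (x:ℂ) ^ (-(s:ℂ)) := by
      rw [one_div, Real.inv_rpow hx.le, ← Real.rpow_neg hx.le, Complex.ofReal_cpow hx.le]; simp
    rw [Complex.ofReal_mul, e] at h2
    rw [← h2]
    congr 1; ext t; simp
  have hfreq : ∃ᶠ z in 𝓝[≠] (1:ℂ), complexMGF (fun t : ℝ => -t) μ z =
      z ^ (-(s:ℂ)) * (Real.Gamma s : ℂ) := by
    have ht : Tendsto (fun x : ℝ => (x:ℂ)) (𝓝[>] (1:ℝ)) (𝓝[≠] (1:ℂ)) := by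
      refine tendsto_nhdsWithin_iff.2 ⟨?_, ?_⟩
      · have : Tendsto (fun x : ℝ => (x:ℂ)) (𝓝 (1:ℝ)) (𝓝 ((1:ℝ):ℂ)) := Complex.continuous_ofReal.tendsto 1
        simpa using this.mono_left nhdsWithin_le_nhds
      · filter_upwards [self_mem_nhdsWithin] with x hx
        have : x ≠ 1 := ne_of_gt hx
        simpa using this
    refine ht.frequently (Eventually.frequently ?_)
    filter_upwards [self_mem_nhdsWithin] with x hx
    exact hreal x (lt_trans one_pos hx)
  have := hA.eqOn_of_preconnected_of_frequently_eq hB hpre (z₀ := 1) (by simp) hfreq hr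
  rw [← hint]; exact this

lemma aux_gammaCα {u α : ℝ} (hu : 0 < u) (hα : 0 < α) {b : ℂ} (hb : 0 < b.re) :
    ∫ t in Ioi (0:ℝ), ((t ^ (u-1) : ℝ) : ℂ) * Complex.exp (-(b * ((t ^ α : ℝ) : ℂ))) =
      ((1/α * Real.Gamma (u/α) : ℝ) : ℂ) * b ^ (-((u/α : ℝ):ℂ)) := by
  have h := aux_gammaC (s := u/α) (div_pos hu hα) hb
  rw [← integral_comp_rpow_Ioi_of_pos hα] at h
  have h2 : ∫ x in Ioi (0:ℝ), (α * x ^ (α - 1)) • ((((x^α) ^ (u/α-1) : ℝ) : ℂ) * Complex.exp (-(b * ((x^α : ℝ):ℂ))))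
     = (α:ℂ) * ∫ t in Ioi (0:ℝ), ((t ^ (u-1) : ℝ) : ℂ) * Complex.exp (-(b * ((t ^ α : ℝ) : ℂ))) := by
    rw [← integral_const_mul]
    refine setIntegral_congr_fun measurableSet_Ioi (fun t ht => ?_)
    have ht : 0 < t := ht
    have e : t ^ (α - 1) * (t^α) ^ (u/α-1) = t ^ (u-1) := by
      rw [← Real.rpow_mul ht.le, ← Real.rpow_add ht]; congr 1; field_simp; ring
    simp only [Complex.real_smul]
    rw [← e]; push_cast; ring
  rw [h2] at h
  have hα' : (α:ℂ) ≠ 0 := by exact_mod_cast hα.ne'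
  push_cast at h ⊢
  field_simp
  linear_combination h

lemma aux_K {x u : ℝ} (hx : x ≠ 0) (hu : 0 < u) (hu2 : u < 2) :
    ∫⁻ t in Ioi (0:ℝ), ENNReal.ofReal (t ^ (u-1) * (1 / (1 + t^2 * x^2))) =
      ENNReal.ofReal (|x| ^ (-u) * (1/2 * Real.Gamma (u/2) * Real.Gamma (1 - u/2))) := by
  have hx2 : 0 < x^2 := by positivity
  have h1 : ∀ t ∈ Ioi (0:ℝ), ENNReal.ofReal (t ^ (u-1) * (1 / (1 + t^2 * x^2))) =
      ∫⁻ y in Ioi (0:ℝ), ENNReal.ofReal (t ^ (u-1) * Real.exp (-(1 + t^2*x^2) * y)) := by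
    intro t ht
    have ht : 0 < t := ht
    have hp : -(1 + t^2*x^2) < 0 := by have : 0 ≤ t^2*x^2 := by positivity
                                       linarith
    rw [← ofReal_integral_eq_lintegral_ofReal]
    · rw [integral_const_mul, integral_exp_mul_Ioi hp]
      congr 2; rw [mul_zero, Real.exp_zero, neg_div_neg_eq]
    · exact (integrableOn_exp_mul_Ioi hp 0).const_mul _
    · exact ae_of_all _ fun y => by positivity
  rw [setLIntegral_congr_fun measurableSet_Ioi h1, lintegral_lintegral_swap (by fun_prop)]
  have h2 : ∀ y ∈ Ioi (0:ℝ), ∫⁻ t in Ioi (0:ℝ), ENNReal.ofReal (t ^ (u-1) * Real.exp (-(1 + t^2*x^2) * y)) =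
      ENNReal.ofReal ((|x| ^ (-u) * (1/2 * Real.Gamma (u/2))) * (Real.exp (-y) * y ^ ((1 - u/2) - 1))) := by
    intro y hy
    have hy : 0 < y := hy
    have e : EqOn (fun t : ℝ => t ^ (u-1) * Real.exp (-(1 + t^2*x^2) * y))
       (fun t => Real.exp (-y) * (t ^ (u-1) * Real.exp (- (y*x^2) * t ^ (2:ℝ)))) (Ioi 0) := by
      intro t ht
      have : Real.exp (-(1 + t^2*x^2) * y) = Real.exp (-y) * Real.exp (- (y*x^2) * t ^ (2:ℝ)) := by
        rw [← Real.exp_add, Real.rpow_two]; congr 1; ring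
      simp only [this]; ring
    rw [← ofReal_integral_eq_lintegral_ofReal]
    · rw [setIntegral_congr_fun measurableSet_Ioi e, integral_const_mul,
        integral_rpow_mul_exp_neg_mul_rpow two_pos (by linarith) (by positivity)]
      congr 1
      rw [Real.mul_rpow hy.le hx2.le, ← sq_abs x, ← Real.rpow_two, ← Real.rpow_mul (abs_nonneg x)]
      have e1 : (2 * (-(u - 1 + 1) / 2)) = -u := by ring
      have e2 : (-(u - 1 + 1) / 2) = 1 - u/2 - 1 := by ring
      rw [e1, e2]
      have e3 : (u - 1 + 1) / 2 = u/2 := by ring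
      rw [e3]; ring
    · have hb : 0 < y * x^2 := by positivity
      have hI := (integrableOn_rpow_mul_exp_neg_mul_rpow (s := u - 1) (by linarith) two_pos hb).const_mul (Real.exp (-y))
      exact IntegrableOn.congr_fun hI e.symm measurableSet_Ioi
    · filter_upwards [self_mem_ae_restrict measurableSet_Ioi] with t ht
      have ht : 0 < t := ht
      positivity
  rw [setLIntegral_congr_fun measurableSet_Ioi h2, ← ofReal_integral_eq_lintegral_ofReal]
  · rw [integral_const_mul, ← Real.Gamma_eq_integral (by linarith)]; ring_nf
  · exact (Real.GammaIntegral_convergent (by linarith)).const_mul _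
  · filter_upwards [self_mem_ae_restrict measurableSet_Ioi] with y hy
    have hy : 0 < y := hy
    have : 0 < Real.Gamma (u/2) := Real.Gamma_pos_of_pos (by linarith)
    have : 0 < |x| := abs_pos.2 hx
    positivity

lemma aux_h {Ω : Type*} [MeasurableSpace Ω] (P : Measure Ω) [IsProbabilityMeasure P] {X : Ω → ℝ}
    (hXm : Measurable X) {α : ℝ} {a : ℂ}
    (hφ : ∀ k : ℝ, 0 < k → ∫ ω, Complex.exp (Complex.I * (k:ℂ) * (X ω : ℂ)) ∂P =
      Complex.exp (-(a * ((k ^ α : ℝ) : ℂ)))) {t : ℝ} (ht : 0 < t) :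
    ∫ ω, 1 / (1 + t^2 * (X ω)^2) ∂P =
      (∫ z in Ioi (0:ℝ), (Real.exp (-z) : ℂ) * Complex.exp (-(a * (((z*t) ^ α : ℝ) : ℂ)))).re := by
  have h1 : ∫ z in Ioi (0:ℝ), (Real.exp (-z) : ℂ) * Complex.exp (-(a * (((z*t) ^ α : ℝ) : ℂ))) =
      ∫ z in Ioi (0:ℝ), ∫ ω, (Real.exp (-z) : ℂ) * Complex.exp (Complex.I * ((z*t : ℝ):ℂ) * (X ω : ℂ)) ∂P := by
    refine setIntegral_congr_fun measurableSet_Ioi (fun z hz => ?_)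
    rw [integral_const_mul, hφ (z*t) (mul_pos hz ht)]
  have hint : Integrable (Function.uncurry fun (z : ℝ) (ω : Ω) =>
      (Real.exp (-z) : ℂ) * Complex.exp (Complex.I * ((z*t : ℝ):ℂ) * (X ω : ℂ)))
      ((volume.restrict (Ioi (0:ℝ))).prod P) := by
    have hI : Integrable (fun z : ℝ => Real.exp (-z)) (volume.restrict (Ioi (0:ℝ))) := by
      have := integrableOn_exp_mul_Ioi (a := -1) (by norm_num) 0
      simpa [IntegrableOn] using this
    refine (hI.comp_fst P).mono' ?_ ?_
    · apply Measurable.aestronglyMeasurable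
      unfold Function.uncurry
      fun_prop
    · refine ae_of_all _ fun p => ?_
      simp only [Function.uncurry]
      rw [norm_mul, Complex.norm_real, Real.norm_eq_abs, abs_of_pos (Real.exp_pos _), Complex.norm_exp]
      simp
  have h2 : ∀ ω, ∫ z in Ioi (0:ℝ), (Real.exp (-z) : ℂ) * Complex.exp (Complex.I * ((z*t : ℝ):ℂ) * (X ω : ℂ)) =
      1 / (1 - Complex.I * ((t * X ω : ℝ) : ℂ)) := by
    intro ω
    have hre : (-(1 - Complex.I * ((t * X ω : ℝ) : ℂ))).re < 0 := by simp
    have := integral_exp_mul_complex_Ioi hre 0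
    rw [Complex.ofReal_zero, mul_zero, Complex.exp_zero, neg_div_neg_eq] at this
    rw [← this]
    refine setIntegral_congr_fun measurableSet_Ioi (fun z hz => ?_)
    rw [Complex.ofReal_exp, ← Complex.exp_add]
    congr 1; push_cast; ring
  have h3 : ∀ ω, (1 / (1 - Complex.I * ((t * X ω : ℝ) : ℂ))).re = 1 / (1 + t^2 * (X ω)^2) := by
    intro ω
    rw [one_div, Complex.inv_re, Complex.normSq_apply]
    simp
    ring
  rw [h1, integral_integral_swap hint]
  simp_rw [h2]
  have hI2 : Integrable (fun ω => 1 / (1 - Complex.I * ((t * X ω : ℝ) : ℂ))) P := by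
    have := hint.integral_prod_right
    simpa only [Function.uncurry, h2] using this
  have := integral_re hI2
  simp only [RCLike.re_eq_complex_re] at this
  rw [← this]
  simp_rw [h3]

lemma aux_moment {Ω : Type*} [MeasurableSpace Ω] (P : Measure Ω) [IsProbabilityMeasure P] {X : Ω → ℝ}
    (hXm : Measurable X) (hX0 : ∀ᵐ ω ∂P, X ω ≠ 0) {α : ℝ} (hα : 0 < α) {a : ℂ} (ha : 0 < a.re)
    (hφ : ∀ k : ℝ, 0 < k → ∫ ω, Complex.exp (Complex.I * (k:ℂ) * (X ω : ℂ)) ∂P =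
      Complex.exp (-(a * ((k ^ α : ℝ) : ℂ)))) {u : ℝ} (hu : 0 < u) (hu1 : u < 1) :
    Integrable (fun ω => |X ω| ^ (-u)) P ∧
    (∫ ω, |X ω| ^ (-u) ∂P) * (1/2 * Real.Gamma (u/2) * Real.Gamma (1 - u/2)) =
      1/α * Real.Gamma (u/α) * Real.Gamma (1 - u) * (a ^ (-((u/α : ℝ):ℂ))).re := by
  set ν : Measure ℝ := volume.restrict (Ioi (0:ℝ)) with hν
  set K : ℝ := 1/2 * Real.Gamma (u/2) * Real.Gamma (1 - u/2) with hK
  have hKpos : 0 < K := by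
    have h1 : 0 < Real.Gamma (u/2) := Real.Gamma_pos_of_pos (by linarith)
    have h2 : 0 < Real.Gamma (1 - u/2) := Real.Gamma_pos_of_pos (by linarith)
    positivity
  set G : ℝ → ℂ := fun t => ((t ^ (u-1) : ℝ) : ℂ) * Complex.exp (-(a * ((t ^ α : ℝ) : ℂ))) with hG
  have hGm : Measurable G := by rw [hG]; fun_prop
  have hGI : Integrable G ν := by
    have h := integrableOn_rpow_mul_exp_neg_mul_rpow (s := u - 1) (by linarith) hα ha
    refine Integrable.mono' h hGm.aestronglyMeasurable ?_
    filter_upwards [self_mem_ae_restrict measurableSet_Ioi] with t ht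
    have ht : 0 < t := ht
    rw [hG]
    simp only
    rw [norm_mul, Complex.norm_real, Real.norm_eq_abs, abs_of_pos (Real.rpow_pos_of_pos ht _), Complex.norm_exp,
      Complex.neg_re, Complex.re_mul_ofReal, neg_mul]
  set F : ℝ → ℝ → ℂ := fun z t => ((Real.exp (-z) * z ^ (1-u) : ℝ) : ℂ) * G (z * t) with hF
  have hFm : Measurable (Function.uncurry F) := by
    unfold Function.uncurry; simp only [hF]; fun_prop
  have hscale : ∀ {E : Type} [NormedAddCommGroup E] [NormedSpace ℝ E] (g : ℝ → E) (z : ℝ), 0 < z →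
      ∫ t, g (z * t) ∂ν = z⁻¹ • ∫ t, g t ∂ν := by
    intro E _ _ g z hz
    have := integral_comp_mul_left_Ioi g 0 hz
    rwa [mul_zero] at this
  have hpow : ∀ z : ℝ, 0 < z → Real.exp (-z) * z ^ (1-u) * z⁻¹ = Real.exp (-z) * z ^ (1 - u - 1) := by
    intro z hz; rw [Real.rpow_sub_one hz.ne' (1-u)]; ring
  have hgam : Integrable (fun z : ℝ => Real.exp (-z) * z ^ (1 - u - 1)) ν :=
    Real.GammaIntegral_convergent (by linarith)
  have hFI : Integrable (Function.uncurry F) (ν.prod ν) := by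
    rw [integrable_prod_iff hFm.aestronglyMeasurable]
    constructor
    · filter_upwards [self_mem_ae_restrict measurableSet_Ioi] with z hz
      have hz : 0 < z := hz
      show Integrable (fun t => ((Real.exp (-z) * z ^ (1-u) : ℝ) : ℂ) * G (z * t)) ν
      refine Integrable.const_mul ?_ _
      have := (integrableOn_Ioi_comp_mul_left_iff G 0 hz).2 (by rw [mul_zero]; exact hGI)
      exact this
    · refine (hgam.mul_const (∫ t, ‖G t‖ ∂ν)).congr ?_
      filter_upwards [self_mem_ae_restrict measurableSet_Ioi] with z hz
      have hz : 0 < z := hz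
      have hc : 0 ≤ Real.exp (-z) * z ^ (1-u) := by positivity
      simp only [Function.uncurry, hF, norm_mul, Complex.norm_real, Real.norm_eq_abs]
      rw [integral_const_mul, hscale (fun t => ‖G t‖) z hz, smul_eq_mul, ← mul_assoc,
        abs_of_pos (Real.exp_pos _), abs_of_pos (Real.rpow_pos_of_pos hz _), hpow z hz]
  have hFval : ∫ z, ∫ t, F z t ∂ν ∂ν = ((Real.Gamma (1-u) : ℝ) : ℂ) * ∫ t, G t ∂ν := by
    have e : ∫ z, ∫ t, F z t ∂ν ∂ν = ∫ z, ((Real.exp (-z) * z ^ (1 - u - 1) : ℝ) : ℂ) * ∫ t, G t ∂ν ∂ν := by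
      refine setIntegral_congr_fun measurableSet_Ioi (fun z hz => ?_)
      have hz : 0 < z := hz
      simp only [hF]
      rw [integral_const_mul, hscale G z hz, Complex.real_smul, ← mul_assoc, ← Complex.ofReal_mul, hpow z hz]
    rw [e, integral_mul_const, integral_complex_ofReal, Real.Gamma_eq_integral (by linarith)]
  have hGval : ∫ t, G t ∂ν = ((1/α * Real.Gamma (u/α) : ℝ) : ℂ) * a ^ (-((u/α : ℝ):ℂ)) :=
    aux_gammaCα hu hα ha
  -- relate h
  have hh : ∀ t : ℝ, 0 < t → t ^ (u-1) * ∫ ω, 1 / (1 + t^2 * (X ω)^2) ∂P = (∫ z, F z t ∂ν).re := by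
    intro t ht
    rw [aux_h P hXm hφ ht, ← Complex.re_ofReal_mul, ← integral_const_mul]
    congr 1
    refine setIntegral_congr_fun measurableSet_Ioi (fun z hz => ?_)
    have hz : 0 < z := hz
    simp only [hF, hG]
    have : z ^ (1-u) * (z * t) ^ (u-1) = t ^ (u-1) := by
      rw [Real.mul_rpow hz.le ht.le, ← mul_assoc, ← Real.rpow_add hz]; simp
    rw [← this]; push_cast; ring
  have hHI : Integrable (fun t => (∫ z, F z t ∂ν).re) ν := hFI.integral_prod_right.re
  have hHval : ∫ t, (∫ z, F z t ∂ν).re ∂ν =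
      1/α * Real.Gamma (u/α) * Real.Gamma (1 - u) * (a ^ (-((u/α : ℝ):ℂ))).re := by
    have h1 := integral_re hFI.integral_prod_right
    simp only [RCLike.re_eq_complex_re, Function.uncurry] at h1
    rw [h1, ← integral_integral_swap hFI, hFval, hGval, ← mul_assoc, ← Complex.ofReal_mul, Complex.re_ofReal_mul]
    ring
  have hL : ∫⁻ ω, ENNReal.ofReal (|X ω| ^ (-u) * K) ∂P =
      ENNReal.ofReal (1/α * Real.Gamma (u/α) * Real.Gamma (1 - u) * (a ^ (-((u/α : ℝ):ℂ))).re) := by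
    have e1 : ∫⁻ ω, ENNReal.ofReal (|X ω| ^ (-u) * K) ∂P =
        ∫⁻ ω, ∫⁻ t, ENNReal.ofReal (t ^ (u-1) * (1 / (1 + t^2 * (X ω)^2))) ∂ν ∂P := by
      refine lintegral_congr_ae ?_
      filter_upwards [hX0] with ω hω
      rw [aux_K hω hu (by linarith)]
    rw [e1, lintegral_lintegral_swap (by unfold Function.uncurry; fun_prop), ← hHval,
      ofReal_integral_eq_lintegral_ofReal hHI]
    · refine setLIntegral_congr_fun measurableSet_Ioi (fun t ht => ?_)
      have ht : 0 < t := ht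
      have hb : Integrable (fun ω => t ^ (u-1) * (1 / (1 + t^2 * (X ω)^2))) P := by
        refine Integrable.const_mul ?_ _
        refine Integrable.mono' (integrable_const (1:ℝ)) (by
          apply Measurable.aestronglyMeasurable; fun_prop) (ae_of_all _ fun ω => ?_)
        have : 0 ≤ t^2 * (X ω)^2 := by positivity
        rw [Real.norm_eq_abs, abs_of_nonneg (by positivity), div_le_one (by positivity)]
        linarith
      rw [← hh t ht, ← integral_const_mul, ofReal_integral_eq_lintegral_ofReal hb]
      exact ae_of_all _ fun ω => by positivity
    · filter_upwards [self_mem_ae_restrict measurableSet_Ioi] with t ht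
      have ht : 0 < t := ht
      rw [← hh t ht]
      have : 0 ≤ ∫ ω, 1 / (1 + t^2 * (X ω)^2) ∂P := integral_nonneg fun ω => by positivity
      positivity
  have hnn : 0 ≤ᵐ[P] fun ω => |X ω| ^ (-u) * K := ae_of_all _ fun ω => by positivity
  have hms : AEStronglyMeasurable (fun ω => |X ω| ^ (-u) * K) P := by
    apply Measurable.aestronglyMeasurable; fun_prop
  have hI : Integrable (fun ω => |X ω| ^ (-u) * K) P := by
    refine ⟨hms, ?_⟩
    rw [hasFiniteIntegral_iff_ofReal hnn, hL]
    exact ENNReal.ofReal_lt_top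
  have hI' : Integrable (fun ω => |X ω| ^ (-u)) P := by
    refine (hI.mul_const K⁻¹).congr (ae_of_all _ fun ω => ?_)
    simp only
    field_simp
  refine ⟨hI', ?_⟩
  rw [← integral_mul_const, integral_eq_lintegral_of_nonneg_ae hnn hms, hL, ENNReal.toReal_ofReal]
  rw [← hHval]
  refine setIntegral_nonneg measurableSet_Ioi fun t ht => ?_
  have ht : 0 < t := ht
  rw [← hh t ht]
  have : 0 ≤ ∫ ω, 1 / (1 + t^2 * (X ω)^2) ∂P := integral_nonneg fun ω => by positivity
  positivity


/-- second order expansions -/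
lemma aux_comp {F h : ℝ → ℝ} {b : ℝ} {l : Filter ℝ} (hl : l ≤ 𝓝[≠] 0) (hF : HasDerivAt F 1 0) (hF0 : F 0 = 0)
    (hh : Tendsto (fun u => h u / u^2) l (𝓝 b)) :
    Tendsto (fun u => F (h u) / u^2) l (𝓝 b) := by
  have hu : Tendsto (fun u : ℝ => u^2) l (𝓝 0) := by
    have : Tendsto (fun u : ℝ => u^2) (𝓝 0) (𝓝 (0^2)) := (continuous_pow 2).tendsto 0
    simpa using this.mono_left (hl.trans nhdsWithin_le_nhds)
  have hne : ∀ᶠ u in l, u ≠ 0 := hl self_mem_nhdsWithin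
  have h0 : Tendsto h l (𝓝 0) := by
    have := hh.mul hu
    rw [mul_zero] at this
    refine this.congr' ?_
    filter_upwards [hne] with u hu
    field_simp
  -- F x = x * dslope
  have hc : ContinuousAt (dslope F 0) 0 := continuousAt_dslope_same.2 hF.differentiableAt
  have h1 : Tendsto (fun u => dslope F 0 (h u)) l (𝓝 1) := by
    have := hc.tendsto.comp h0
    rwa [dslope_same, hF.deriv] at this
  have h2 := hh.mul h1
  rw [mul_one] at h2
  refine h2.congr fun u => ?_
  have := sub_smul_dslope F 0 (h u)
  simp [hF0] at this
  rw [← this]; ring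

lemma aux_log {h : ℝ → ℝ} {b : ℝ} {l : Filter ℝ} (hl : l ≤ 𝓝[≠] 0)
    (hh : Tendsto (fun u => (h u - 1) / u^2) l (𝓝 b)) :
    Tendsto (fun u => Real.log (h u) / u^2) l (𝓝 b) := by
  have hF : HasDerivAt (fun x : ℝ => Real.log (x + 1)) 1 0 := by
    have := (((hasDerivAt_id (0:ℝ)).add_const 1).log (by simp))
    simpa using this
  have := aux_comp (h := fun u => h u - 1) hl hF (by simp) hh
  simpa using this

lemma aux_exp {h : ℝ → ℝ} {b : ℝ} {l : Filter ℝ} (hl : l ≤ 𝓝[≠] 0)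
    (hh : Tendsto (fun u => h u / u^2) l (𝓝 b)) :
    Tendsto (fun u => (Real.exp (h u) - 1) / u^2) l (𝓝 b) := by
  have hF : HasDerivAt (fun x : ℝ => Real.exp x - 1) 1 0 := by
    have := (Real.hasDerivAt_exp 0).sub_const 1
    simpa using this
  exact aux_comp hl hF (by simp) hh

lemma aux_scale {f : ℝ → ℝ} {b : ℝ} (hf : Tendsto (fun u => f u / u^2) (𝓝[≠] 0) (𝓝 b)) (c : ℝ) (hf0 : f 0 = 0) :
    Tendsto (fun u => f (c*u) / u^2) (𝓝[≠] 0) (𝓝 (b*c^2)) := by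
  rcases eq_or_ne c 0 with rfl | hc
  · simp [hf0]
  have ht : Tendsto (fun u : ℝ => c * u) (𝓝[≠] 0) (𝓝[≠] 0) := by
    refine tendsto_nhdsWithin_iff.2 ⟨?_, ?_⟩
    · have : Tendsto (fun u : ℝ => c*u) (𝓝 0) (𝓝 (c*0)) := (continuous_const_mul c).tendsto 0
      rw [mul_zero] at this
      exact this.mono_left nhdsWithin_le_nhds
    · filter_upwards [self_mem_nhdsWithin] with u hu
      simpa [hc] using hu
  refine ((hf.comp ht).mul_const (c^2)).congr fun u => ?_
  simp only [Function.comp]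
  rw [mul_pow]; field_simp

lemma aux_logcos : Tendsto (fun u => Real.log (Real.cos u) / u^2) (𝓝[≠] 0) (𝓝 (-(1/2))) := by
  refine aux_log le_rfl ?_
  have h0 : Tendsto (fun u : ℝ => |u|^2 * (5/96)) (𝓝[≠] 0) (𝓝 0) := by
    have : Tendsto (fun u : ℝ => |u|^2 * (5/96)) (𝓝 0) (𝓝 (|0|^2 * (5/96))) := by
      apply Continuous.tendsto; fun_prop
    simpa using this.mono_left nhdsWithin_le_nhds
  rw [tendsto_iff_norm_sub_tendsto_zero]
  refine squeeze_zero' (Eventually.of_forall fun _ => norm_nonneg _) ?_ h0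
  have hs : ∀ᶠ u : ℝ in 𝓝[≠] 0, |u| ≤ 1 := by
    refine nhdsWithin_le_nhds ?_
    filter_upwards [Metric.ball_mem_nhds (0:ℝ) one_pos] with u hu
    simpa using (le_of_lt (mem_ball_zero_iff.1 hu))
  filter_upwards [hs, self_mem_nhdsWithin] with u hu hne
  have hne : u ≠ 0 := hne
  have hb := Real.cos_bound hu
  have e : (Real.cos u - 1)/u^2 - -(1/2) = (Real.cos u - (1 - u^2/2)) / u^2 := by field_simp; ring
  have hp : 0 < u^2 := by positivity
  rw [e, Real.norm_eq_abs, abs_div, abs_of_pos hp, div_le_iff₀ hp]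
  refine hb.trans (le_of_eq ?_)
  rw [← sq_abs u]; ring

lemma aux_logsinc : Tendsto (fun u => Real.log (Real.sin u / u) / u^2) (𝓝[≠] 0) (𝓝 (-(1/6))) := by
  refine aux_log le_rfl ?_
  have h0 : Tendsto (fun u : ℝ => |u|^2 / 100) (𝓝[≠] 0) (𝓝 0) := by
    have : Tendsto (fun u : ℝ => |u|^2 / 100) (𝓝 0) (𝓝 (|0|^2 / 100)) := by
      apply Continuous.tendsto; fun_prop
    simpa using this.mono_left nhdsWithin_le_nhds
  rw [tendsto_iff_norm_sub_tendsto_zero]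
  refine squeeze_zero' (Eventually.of_forall fun _ => norm_nonneg _) ?_ h0
  have hs : ∀ᶠ u : ℝ in 𝓝[≠] 0, |u| ≤ 1 := by
    refine nhdsWithin_le_nhds ?_
    filter_upwards [Metric.ball_mem_nhds (0:ℝ) one_pos] with u hu
    simpa using (le_of_lt (mem_ball_zero_iff.1 hu))
  filter_upwards [hs, self_mem_nhdsWithin] with u hu hne
  have hne : u ≠ 0 := hne
  have hb := Real.sin_bound hu
  have e : (Real.sin u / u - 1)/u^2 - -(1/6) = (Real.sin u - (u - u^3/6)) / u^3 := by field_simp; ring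
  have hp : 0 < |u| := abs_pos.2 hne
  rw [e, Real.norm_eq_abs, abs_div, abs_pow, div_le_iff₀ (by positivity)]
  refine hb.trans (le_of_eq ?_)
  ring

/-- expansion of log Gamma -/
lemma aux_logGamma : Tendsto (fun u => (Real.log (Real.Gamma (1 + u)) + Real.eulerMascheroniConstant * u) / u^2)
    (𝓝[≠] 0) (𝓝 (Real.pi^2/12)) := by
  set C := Real.eulerMascheroniConstant
  set f : ℂ → ℂ := fun z => Complex.Gamma (1 + z) * Complex.exp (C * z) with hf
  have hdf : HasDerivAt f 0 0 := by
    have h1 : HasDerivAt (fun z : ℂ => Complex.Gamma (1 + z)) (-(C:ℂ)) 0 := by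
      have := Complex.hasDerivAt_Gamma_one
      have h2 : HasDerivAt Complex.Gamma (-(C:ℂ)) (1 + 0) := by simpa using this
      simpa using h2.comp_const_add 1 0
    have h3 : HasDerivAt (fun z : ℂ => Complex.exp (C * z)) (C:ℂ) 0 := by
      have := ((hasDerivAt_id (0:ℂ)).const_mul (C:ℂ)).cexp
      simpa using this
    have := h1.fun_mul h3
    simpa [hf] using this
  have hD : DifferentiableOn ℂ f (Metric.ball 0 1) := by
    intro z hz
    have hz1 : ‖z‖ < 1 := by simpa using hz
    have hre : 0 < (1 + z).re := by
      have := (abs_lt.1 (lt_of_le_of_lt (Complex.abs_re_le_norm z) hz1)).1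
      simp; linarith
    have h1 : DifferentiableAt ℂ Complex.Gamma (1 + z) := by
      refine Complex.differentiableAt_Gamma _ fun m hm => ?_
      rw [hm] at hre; simp at hre
      have : (0:ℝ) ≤ m := Nat.cast_nonneg m
      linarith
    have h2 : DifferentiableAt ℂ (fun z => Complex.Gamma (1 + z)) z :=
      DifferentiableAt.comp z h1 (by fun_prop)
    exact (h2.mul (by fun_prop)).differentiableWithinAt
  have hball : Metric.ball (0:ℂ) 1 ∈ 𝓝 (0:ℂ) := Metric.ball_mem_nhds _ one_pos
  set g1 := dslope f 0
  set g2 := dslope g1 0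
  have hD1 : DifferentiableOn ℂ g1 (Metric.ball 0 1) := (Complex.differentiableOn_dslope hball).2 hD
  have hD2 : DifferentiableOn ℂ g2 (Metric.ball 0 1) := (Complex.differentiableOn_dslope hball).2 hD1
  have hc : ContinuousAt g2 0 := (hD2.differentiableAt hball).continuousAt
  have hg10 : g1 0 = 0 := by simp [g1, dslope_same, hdf.deriv]
  have hf0 : f 0 = 1 := by simp [hf]
  have hexp : ∀ z, f z - 1 = z * (z * g2 z) := by
    intro z
    have h1 := sub_smul_dslope f 0 z
    have h2 := sub_smul_dslope g1 0 z
    simp only [sub_zero, smul_eq_mul, hg10, hf0] at h1 h2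
    rw [h2, h1]
  have hreal : ∀ x : ℝ, Real.Gamma (1 + x) * Real.exp (C * x) - 1 = x^2 * (g2 x).re := by
    intro x
    have h1 := hexp x
    have h2 : f x = ((Real.Gamma (1+x) * Real.exp (C*x) : ℝ) : ℂ) := by
      simp only [hf]; rw [Complex.ofReal_mul, ← Complex.Gamma_ofReal]; push_cast; rfl
    rw [h2] at h1
    have h3 := congrArg Complex.re h1
    rw [← mul_assoc, ← Complex.ofReal_mul, Complex.re_ofReal_mul] at h3
    simp only [Complex.sub_re, Complex.ofReal_re, Complex.one_re] at h3
    rw [h3]; ring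
  set q := (g2 0).re
  have hq : Tendsto (fun u : ℝ => (g2 u).re) (𝓝[≠] 0) (𝓝 q) := by
    have h1 : Tendsto (fun u : ℝ => (u:ℂ)) (𝓝 0) (𝓝 0) := by
      simpa using Complex.continuous_ofReal.tendsto 0
    have := (Complex.continuous_re.tendsto _).comp (hc.tendsto.comp h1)
    exact this.mono_left nhdsWithin_le_nhds
  have h1 : Tendsto (fun u : ℝ => (Real.Gamma (1 + u) * Real.exp (C * u) - 1)/u^2) (𝓝[≠] 0) (𝓝 q) := by
    refine hq.congr' ?_
    filter_upwards [self_mem_nhdsWithin] with u hu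
    have hu : u ≠ 0 := hu
    rw [hreal]; field_simp
  have h2 := aux_log le_rfl h1
  have hs : ∀ᶠ u : ℝ in 𝓝[≠] 0, |u| < 1 := by
    refine nhdsWithin_le_nhds ?_
    filter_upwards [Metric.ball_mem_nhds (0:ℝ) one_pos] with u hu
    simpa using (mem_ball_zero_iff.1 hu)
  have h3 : Tendsto (fun u => (Real.log (Real.Gamma (1 + u)) + C * u) / u^2) (𝓝[≠] 0) (𝓝 q) := by
    refine h2.congr' ?_
    filter_upwards [hs] with u hu
    have : 0 < Real.Gamma (1+u) := Real.Gamma_pos_of_pos (by linarith [(abs_lt.1 hu).1])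
    rw [Real.log_mul this.ne' (Real.exp_pos _).ne', Real.log_exp]
  have h4 := aux_scale (f := fun u => Real.log (Real.Gamma (1 + u)) + C * u) h3 (-1) (by simp)
  have h5 := h3.add h4
  have h6 := (aux_scale (f := fun u => Real.log (Real.sin u / u)) aux_logsinc Real.pi (by simp)).neg
  have h7 := tendsto_nhds_unique h5 (h6.congr' ?_)
  · have : q = Real.pi^2/12 := by linarith
    rwa [this] at h3
  filter_upwards [hs, self_mem_nhdsWithin] with u hu hne
  have hne : u ≠ 0 := hne
  have g1p : 0 < Real.Gamma (1+u) := Real.Gamma_pos_of_pos (by linarith [(abs_lt.1 hu).1])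
  have g2p : 0 < Real.Gamma (1 + -1 * u) := Real.Gamma_pos_of_pos (by linarith [(abs_lt.1 hu).2])
  have key : Real.Gamma (1+u) * Real.Gamma (1 + -1 * u) = (Real.sin (Real.pi * u) / (Real.pi * u))⁻¹ := by
    have := Real.Gamma_mul_Gamma_one_sub u
    rw [add_comm 1 u, Real.Gamma_add_one hne, mul_assoc, show 1 + -1 * u = 1 - u by ring, this]
    rw [inv_div]; ring
  rw [← add_div, ← neg_div]
  congr 1
  rw [← Real.log_inv, ← key, Real.log_mul g1p.ne' g2p.ne']; ring

lemma aux_exp2 : Tendsto (fun u : ℝ => (Real.exp u - 1 - u) / u^2) (𝓝[≠] 0) (𝓝 (1/2)) := by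
  have h0 : Tendsto (fun u : ℝ => |u| * (4/18)) (𝓝[≠] 0) (𝓝 0) := by
    have : Tendsto (fun u : ℝ => |u| * (4/18)) (𝓝 0) (𝓝 (|0| * (4/18))) := by
      apply Continuous.tendsto; fun_prop
    simpa using this.mono_left nhdsWithin_le_nhds
  rw [tendsto_iff_norm_sub_tendsto_zero]
  refine squeeze_zero' (Eventually.of_forall fun _ => norm_nonneg _) ?_ h0
  have hs : ∀ᶠ u : ℝ in 𝓝[≠] 0, |u| ≤ 1 := by
    refine nhdsWithin_le_nhds ?_
    filter_upwards [Metric.ball_mem_nhds (0:ℝ) one_pos] with u hu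
    simpa using (le_of_lt (mem_ball_zero_iff.1 hu))
  filter_upwards [hs, self_mem_nhdsWithin] with u hu hne
  have hne : u ≠ 0 := hne
  have hb := Real.exp_bound hu (n := 3) (by norm_num)
  have e : (Real.exp u - 1 - u)/u^2 - 1/2 = (Real.exp u - ∑ m ∈ Finset.range 3, u^m / m.factorial) / u^2 := by
    simp [Finset.sum_range_succ, Nat.factorial]; field_simp; ring
  have hp : 0 < u^2 := by positivity
  rw [e, Real.norm_eq_abs, abs_div, abs_of_pos hp, div_le_iff₀ hp]
  refine hb.trans (le_of_eq ?_)
  have h3 : |u|^3 = |u| * u^2 := by rw [← sq_abs u]; ring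
  rw [h3]; simp [Nat.factorial]; ring

lemma aux_bound {δ y u : ℝ} (hδ : 0 < δ) (hu : 0 < u) (huδ : u ≤ δ/2) :
    |(Real.exp (-y*u) - 1 - (-y*u)) / u^2| ≤ y^2 + 8/δ^2 * Real.exp (-δ*y) := by
  have hp : 0 < u^2 := by positivity
  have hnn : 0 ≤ Real.exp (-y*u) - 1 - (-y*u) := by linarith [Real.add_one_le_exp (-y*u)]
  rw [abs_of_nonneg (by positivity), div_le_iff₀ hp]
  have hE := Real.exp_pos (-δ*y)
  rcases le_total 0 y with hy | hy
  · have h1 : Real.exp (-y*u) ≤ 1 - y*u + (y*u)^2 := by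
      have hyu : 0 ≤ y*u := by positivity
      have h2 : Real.exp (y*u) ≥ 1 + y*u := by linarith [Real.add_one_le_exp (y*u)]
      have h3 : Real.exp (-y*u) * Real.exp (y*u) = 1 := by rw [← Real.exp_add]; simp
      have h4 := Real.exp_pos (-y*u)
      have h5 : Real.exp (-y*u) * (1 + y*u) ≤ 1 := by nlinarith
      have h6 : (1:ℝ) ≤ (1 - y*u + (y*u)^2) * (1 + y*u) := by
        have : 0 ≤ (y*u)^3 := by positivity
        nlinarith
      exact le_of_mul_le_mul_right (h5.trans h6) (by linarith)
    have : 0 ≤ 8/δ^2 * Real.exp (-δ*y) * u^2 := by positivity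
    nlinarith
  · obtain ⟨s, rfl⟩ : ∃ s, y = -s := ⟨-y, by ring⟩
    have hs : 0 ≤ s := by linarith
    simp only [neg_neg, neg_mul_neg]
    have hx : 0 ≤ s*u := by positivity
    -- exp x - 1 - x ≤ x^2 * exp x
    have h1 : Real.exp (s*u) - 1 - s*u ≤ (s*u)^2 * Real.exp (s*u) := by
      have h3 : Real.exp (s*u) * Real.exp (-(s*u)) = 1 := by rw [← Real.exp_add]; simp
      have h2 : Real.exp (-(s*u)) ≥ 1 - s*u := by linarith [Real.add_one_le_exp (-(s*u))]
      have h4 := Real.exp_pos (s*u)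
      have h5 : Real.exp (s*u) * (1 - s*u) ≤ 1 := by nlinarith
      have h6 : Real.exp (s*u) * (1 - s*u) * (1+s*u) ≤ 1 * (1+s*u) := by gcongr
      nlinarith
    have h2 : Real.exp (s*u) ≤ Real.exp (s*(δ/2)) := by gcongr
    have h3 : s^2 ≤ 8/δ^2 * Real.exp (s*(δ/2)) := by
      have := Real.quadratic_le_exp_of_nonneg (x := s*(δ/2)) (by positivity)
      have h4 : (s*(δ/2))^2/2 ≤ Real.exp (s*(δ/2)) := by nlinarith [show 0 ≤ s*(δ/2) by positivity]
      rw [div_mul_eq_mul_div, le_div_iff₀ (by positivity)]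
      nlinarith
    have h5 : Real.exp (s*(δ/2)) * Real.exp (s*(δ/2)) = Real.exp (δ*s) := by
      rw [← Real.exp_add]; congr 1; ring
    calc Real.exp (s*u) - 1 - s*u ≤ (s*u)^2 * Real.exp (s*u) := h1
      _ ≤ (s*u)^2 * Real.exp (s*(δ/2)) := by gcongr
      _ = s^2 * Real.exp (s*(δ/2)) * u^2 := by ring
      _ ≤ (8/δ^2 * Real.exp (s*(δ/2))) * Real.exp (s*(δ/2)) * u^2 := by gcongr
      _ = 8/δ^2 * Real.exp (δ*s) * u^2 := by rw [← h5]; ring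
      _ ≤ _ := by
        have : 0 ≤ s^2 * u^2 := by positivity
        have e : δ * s = -δ * -s := by ring
        rw [e]
        nlinarith

lemma aux_var {Ω : Type*} [MeasurableSpace Ω] (P : Measure Ω) [IsProbabilityMeasure P] {Y : Ω → ℝ}
    (hYm : Measurable Y) (hY1 : Integrable Y P) (hY2 : Integrable (fun ω => Y ω ^ 2) P) {δ D : ℝ} (hδ : 0 < δ)
    (hE : ∀ u, 0 < u → u ≤ δ → Integrable (fun ω => Real.exp (-u * Y ω)) P)
    (hN : Tendsto (fun u => ((∫ ω, Real.exp (-u * Y ω) ∂P) - 1) / u^2) (𝓝[>] 0) (𝓝 (D/2))) :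
    ∫ ω, Y ω ∂P = 0 ∧ ∫ ω, Y ω ^ 2 ∂P = D := by
  have hle : 𝓝[>] (0:ℝ) ≤ 𝓝[≠] 0 := nhdsWithin_mono _ fun x hx => ne_of_gt hx
  have hsm : ∀ᶠ u : ℝ in 𝓝[>] 0, 0 < u ∧ u ≤ δ/2 := by
    filter_upwards [Ioc_mem_nhdsGT (half_pos hδ)] with u hu using hu
  have hlim : Tendsto (fun u => ∫ ω, (Real.exp (-Y ω * u) - 1 - (-Y ω * u)) / u^2 ∂P) (𝓝[>] 0)
      (𝓝 (∫ ω, 1/2 * (-Y ω)^2 ∂P)) := by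
    refine tendsto_integral_filter_of_dominated_convergence
      (fun ω => Y ω ^ 2 + 8/δ^2 * Real.exp (-δ * Y ω)) ?_ ?_ ?_ ?_
    · refine Eventually.of_forall fun u => ?_
      apply Measurable.aestronglyMeasurable; fun_prop
    · filter_upwards [hsm] with u hu
      exact ae_of_all _ fun ω => aux_bound hδ hu.1 hu.2
    · exact hY2.add ((hE δ hδ le_rfl).const_mul _)
    · refine ae_of_all _ fun ω => ?_
      exact (aux_scale (f := fun x => Real.exp x - 1 - x) aux_exp2 (-Y ω) (by simp)).mono_left hle
  set m := ∫ ω, Y ω ∂P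
  have hval : ∀ᶠ u : ℝ in 𝓝[>] 0, ∫ ω, (Real.exp (-Y ω * u) - 1 - (-Y ω * u)) / u^2 ∂P -
      ((∫ ω, Real.exp (-u * Y ω) ∂P) - 1) / u^2 = m / u := by
    filter_upwards [hsm] with u hu
    have hu0 := hu.1.ne'
    have e : ∀ ω, (Real.exp (-Y ω * u) - 1 - (-Y ω * u)) / u^2 = ((Real.exp (-u * Y ω) - 1) + u * Y ω) / u^2 := by
      intro ω; rw [show -Y ω * u = -u * Y ω by ring]; ring
    simp_rw [e]
    have i1 := hE u hu.1 (by linarith [hu.2])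
    have i2 : Integrable (fun ω => Real.exp (-u * Y ω) - 1) P := i1.sub (integrable_const 1)
    rw [integral_div, integral_add i2 (hY1.const_mul u),
      integral_sub i1 (integrable_const 1), integral_const_mul]
    simp
    field_simp
    ring
  have h1 := (hlim.sub hN).congr' hval
  have h0 : Tendsto (fun u : ℝ => u) (𝓝[>] 0) (𝓝 0) := tendsto_id.mono_left nhdsWithin_le_nhds
  have h2 := h1.mul h0
  rw [mul_zero] at h2
  have hm : m = 0 := by
    refine tendsto_nhds_unique (tendsto_const_nhds (x := m) (f := 𝓝[>] (0:ℝ))) (h2.congr' ?_)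
    filter_upwards [hsm] with u hu
    have hu0 := hu.1.ne'
    field_simp
  refine ⟨hm, ?_⟩
  have h1' : Tendsto (fun _ : ℝ => (0:ℝ)) (𝓝[>] 0) (𝓝 (∫ ω, 1/2 * (-Y ω)^2 ∂P - D/2)) :=
    h1.congr fun u => by rw [hm, zero_div]
  have h3 := tendsto_nhds_unique h1' tendsto_const_nhds
  rw [integral_const_mul] at h3
  simp only [neg_sq] at h3
  linarith

lemma aux_nondeg {Ω : Type*} [MeasurableSpace Ω] (P : Measure Ω) [IsProbabilityMeasure P] {X : Ω → ℝ}
    (hXm : Measurable X) (hX0 : ∀ᵐ ω ∂P, X ω ≠ 0) {α θ τ : ℝ} (hα : 0 < α) (hθ : |α * θ| < 1)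
    (hL1 : Integrable (fun ω => Real.log |X ω|) P) (hL2 : Integrable (fun ω => Real.log |X ω| ^ 2) P)
    (hφ : ∀ k : ℝ, 0 < k → ∫ ω, Complex.exp (Complex.I * (k:ℂ) * (X ω : ℂ)) ∂P =
      Complex.exp (-(Complex.exp (((α * τ + Real.eulerMascheroniConstant * (α - 1) : ℝ) : ℂ) +
        ((-(Real.pi/2 * (α * θ)) : ℝ) : ℂ) * Complex.I) * ((k ^ α : ℝ) : ℂ)))) :
    ∫ ω, (Real.log |X ω| - τ) ∂P = 0 ∧ ∫ ω, (Real.log |X ω| - τ)^2 ∂P =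
      Real.pi ^ 2 / 4 * (1 - θ ^ 2) + Real.pi ^ 2 / 6 * (1/α^2 - 1) := by
  set C := Real.eulerMascheroniConstant
  set A : ℝ := α * τ + C * (α - 1) with hA
  set B : ℝ := -(Real.pi/2 * (α * θ)) with hB
  set a : ℂ := Complex.exp ((A : ℂ) + (B : ℂ) * Complex.I) with ha
  have hpi := Real.pi_pos
  have hBlt : |B| < Real.pi/2 := by
    rw [hB, abs_neg, abs_mul, abs_of_pos (by positivity)]
    nlinarith
  have hre : 0 < a.re := by
    rw [ha, Complex.exp_re]
    have h1 : ((A : ℂ) + (B : ℂ) * Complex.I).im = B := by simp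
    rw [h1]
    exact mul_pos (Real.exp_pos _) (Real.cos_pos_of_mem_Ioo ⟨(abs_lt.1 hBlt).1, (abs_lt.1 hBlt).2⟩)
  have hpow : ∀ u : ℝ, (a ^ (-((u/α : ℝ):ℂ))).re = Real.exp (-(u/α) * A) * Real.cos (Real.pi/2 * θ * u) := by
    intro u
    rw [Complex.cpow_def_of_ne_zero (Complex.exp_ne_zero _), Complex.log_exp, Complex.exp_re]
    · have h1 : (((A : ℂ) + (B : ℂ) * Complex.I) * -((u/α : ℝ):ℂ)).re = -(u/α) * A := by
        rw [← Complex.ofReal_neg, Complex.re_mul_ofReal]; simp; ring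
      have h2 : (((A : ℂ) + (B : ℂ) * Complex.I) * -((u/α : ℝ):ℂ)).im = Real.pi/2 * θ * u := by
        rw [← Complex.ofReal_neg, Complex.im_mul_ofReal]; simp [hB]; field_simp
      rw [h1, h2]
    · simp; linarith [(abs_lt.1 hBlt).1]
    · simp; linarith [(abs_lt.1 hBlt).2]
  have hle : 𝓝[>] (0:ℝ) ≤ 𝓝[≠] 0 := nhdsWithin_mono _ fun x hx => ne_of_gt hx
  have hexp : ∀ u : ℝ, (fun ω => Real.exp (-u * (Real.log |X ω| - τ))) =ᵐ[P]
      fun ω => Real.exp (u * τ) * |X ω| ^ (-u) := by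
    intro u
    filter_upwards [hX0] with ω hω
    rw [Real.rpow_def_of_pos (abs_pos.2 hω), ← Real.exp_add]
    congr 1; ring
  refine aux_var P (δ := 1/2) (Y := fun ω => Real.log |X ω| - τ) (by fun_prop) (hL1.sub (integrable_const _)) ?_ (by norm_num) ?_ ?_
  · have : Integrable (fun ω => Real.log |X ω| ^ 2 - 2 * τ * Real.log |X ω| + τ^2) P :=
      (hL2.sub (hL1.const_mul _)).add (integrable_const _)
    refine this.congr (ae_of_all _ fun ω => ?_)
    simp only; ring
  · intro u hu hu1
    exact ((aux_moment P hXm hX0 hα hre hφ hu (by linarith)).1.const_mul _).congr (hexp u).symm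
  · -- limit
    have hg := aux_logGamma
    set g : ℝ → ℝ := fun u => Real.log (Real.Gamma (1 + u)) + C * u with hgd
    have hg0 : g 0 = 0 := by simp [hgd]
    have t1 := aux_scale (f := g) hg (1/α) hg0
    have t2 := aux_scale (f := g) hg (-1) hg0
    have t3 := aux_scale (f := g) hg (1/2) hg0
    have t4 := aux_scale (f := g) hg (-1/2) hg0
    have t5 := aux_scale (f := fun u => Real.log (Real.cos u)) aux_logcos (Real.pi/2*θ) (by simp)
    have T := ((((t1.add t2).sub t3).sub t4).add t5).mono_left hle
    set H : ℝ → ℝ := fun u => g (1/α*u) + g (-1*u) - g (1/2*u) - g (-1/2*u) + Real.log (Real.cos (Real.pi/2*θ*u))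
    have T2 : Tendsto (fun u => H u / u^2) (𝓝[>] 0) (𝓝 ((Real.pi ^ 2 / 4 * (1 - θ ^ 2) + Real.pi ^ 2 / 6 * (1/α^2 - 1))/2)) := by
      convert T using 1
      · ext u; simp only [H]; ring
      · congr 1; ring
    refine (aux_exp hle T2).congr' ?_
    have hcos : ∀ᶠ u : ℝ in 𝓝[>] 0, 0 < Real.cos (Real.pi/2*θ*u) := by
      have hc : Tendsto (fun u : ℝ => Real.cos (Real.pi/2*θ*u)) (𝓝 0) (𝓝 (Real.cos (Real.pi/2*θ*0))) := by
        apply Continuous.tendsto; fun_prop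
      rw [mul_zero, Real.cos_zero] at hc
      exact (hc.mono_left nhdsWithin_le_nhds).eventually_const_lt one_pos
    filter_upwards [hcos, Ioc_mem_nhdsGT (show (0:ℝ) < 1/2 by norm_num)] with u hc hu
    have hu0 : 0 < u := hu.1
    have hu1 : u < 1 := by linarith [hu.2]
    congr 2
    rw [integral_congr_ae (hexp u), integral_const_mul]
    have key := (aux_moment P hXm hX0 hα hre hφ hu0 hu1).2
    rw [hpow] at key
    set M := ∫ ω, |X ω| ^ (-u) ∂P
    have p1 : 0 < Real.Gamma (1 + 1/α*u) := Real.Gamma_pos_of_pos (by positivity)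
    have p2 : 0 < Real.Gamma (1 + -1*u) := Real.Gamma_pos_of_pos (by linarith)
    have p3 : 0 < Real.Gamma (1 + 1/2*u) := Real.Gamma_pos_of_pos (by linarith)
    have p4 : 0 < Real.Gamma (1 + -1/2*u) := Real.Gamma_pos_of_pos (by linarith)
    have e1 : Real.Gamma (1 + 1/α*u) = u/α * Real.Gamma (u/α) := by
      rw [← Real.Gamma_add_one (by positivity)]; congr 1; ring
    have e3 : Real.Gamma (1 + 1/2*u) = u/2 * Real.Gamma (u/2) := by
      rw [← Real.Gamma_add_one (by positivity)]; congr 1; ring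
    have e2 : (1 - u) = 1 + -1*u := by ring
    have e4 : (1 - u/2) = 1 + -1/2*u := by ring
    rw [e2, e4] at key
    have key2 : M * (Real.Gamma (1 + 1/2*u) * Real.Gamma (1 + -1/2*u)) =
        Real.Gamma (1 + 1/α*u) * Real.Gamma (1 + -1*u) * (Real.exp (-(u/α) * A) * Real.cos (Real.pi/2*θ*u)) := by
      rw [e1, e3]
      linear_combination u * key
    have key3 : M = Real.Gamma (1 + 1/α*u) * Real.Gamma (1 + -1*u) * (Real.exp (-(u/α) * A) * Real.cos (Real.pi/2*θ*u)) /
        (Real.Gamma (1 + 1/2*u) * Real.Gamma (1 + -1/2*u)) := by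
      rw [eq_div_iff (by positivity)]; exact key2
    have hH : H u = (u * τ) + (-(u/α) * A) + Real.log (Real.Gamma (1 + 1/α*u)) + Real.log (Real.Gamma (1 + -1*u))
        - Real.log (Real.Gamma (1 + 1/2*u)) - Real.log (Real.Gamma (1 + -1/2*u)) + Real.log (Real.cos (Real.pi/2*θ*u)) := by
      simp only [H, hgd, hA]; field_simp; ring
    rw [hH, Real.exp_add, Real.exp_sub, Real.exp_sub, Real.exp_add, Real.exp_add, Real.exp_add,
      Real.exp_log p1, Real.exp_log p2, Real.exp_log p3, Real.exp_log p4, Real.exp_log hc, key3]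
    field_simp

lemma aux_deg {Ω : Type*} [MeasurableSpace Ω] (P : Measure Ω) [IsProbabilityMeasure P] {X : Ω → ℝ}
    (hXm : Measurable X) {θ τ : ℝ} (hθ : θ = 1 ∨ θ = -1)
    (hφ : ∀ k : ℝ, k ≠ 0 → ∫ ω, Complex.exp (Complex.I * (k:ℂ) * (X ω : ℂ)) ∂P =
      Complex.exp (-Complex.exp ((((Real.log |k| : ℝ) : ℂ) + (τ : ℂ) -
              Complex.I * ((Real.pi / 2 : ℝ) : ℂ) * (θ : ℂ) * ((Real.sign k : ℝ) : ℂ))))) :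
    ∀ᵐ ω ∂P, Real.log |X ω| = τ := by
  have hmap : P.map X = Measure.dirac (θ * Real.exp τ) := by
    have := Measure.isProbabilityMeasure_map (μ := P) hXm.aemeasurable
    apply Measure.ext_of_charFun
    ext k
    rw [charFun_dirac, charFun_apply_real, integral_map hXm.aemeasurable (by
      apply Measurable.aestronglyMeasurable; fun_prop)]
    rcases eq_or_ne k 0 with rfl | hk
    · simp
    have e : ∀ ω, (k:ℂ) * (X ω : ℂ) * Complex.I = Complex.I * k * X ω := fun ω => by ring
    simp_rw [e]
    rw [hφ k hk]
    congr 1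
    have hk' : ((Real.exp (Real.log |k|) : ℝ) : ℂ) = ((|k| : ℝ) : ℂ) := by rw [Real.exp_log (abs_pos.2 hk)]
    have hI : Complex.exp (Complex.I * ((Real.pi / 2 : ℝ) : ℂ)) = Complex.I := by
      rw [mul_comm]; push_cast; exact Complex.exp_pi_div_two_mul_I
    have hI2 : Complex.exp (-(Complex.I * ((Real.pi / 2 : ℝ) : ℂ))) = -Complex.I := by
      rw [Complex.exp_neg, hI, Complex.inv_I]
    rw [sub_eq_add_neg, Complex.exp_add, Complex.exp_add, ← Complex.ofReal_exp, hk']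
    rcases lt_or_gt_of_ne hk with hk | hk <;> rcases hθ with rfl | rfl
    · simp only [Real.sign_of_neg hk, abs_of_neg hk]
      push_cast
      simp only [mul_one, mul_neg, neg_neg]
      push_cast at hI; rw [hI]; simp
    · simp only [Real.sign_of_neg hk, abs_of_neg hk]
      push_cast
      simp only [mul_one, mul_neg, neg_neg]
      push_cast at hI2; rw [hI2]; simp
    · simp only [Real.sign_of_pos hk, abs_of_pos hk]
      push_cast
      simp only [mul_one, mul_neg, neg_neg]
      push_cast at hI2; rw [hI2]; simp
    · simp only [Real.sign_of_pos hk, abs_of_pos hk]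
      push_cast
      simp only [mul_one, mul_neg, neg_neg]
      push_cast at hI; rw [hI]; simp
  have h1 : ∀ᵐ x ∂(P.map X), x = θ * Real.exp τ := by
    rw [hmap, ae_dirac_eq]; simp
  have h2 := ae_of_ae_map hXm.aemeasurable h1
  filter_upwards [h2] with ω hω
  rw [hω, abs_mul, Real.abs_exp]
  rcases hθ with rfl | rfl <;> simp

theorem second_log_moment_of_strictlyStable {Ω : Type*} [MeasureSpace Ω]
    [IsProbabilityMeasure (ℙ : Measure Ω)] (X : Ω → ℝ) (ν θ τ : ℝ)
    (hX : IsStrictlyStable X ν θ τ)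
    (DV : ℝ) (hDV : DV = Real.pi ^ 2 / 4 * (1 - θ ^ 2) + Real.pi ^ 2 / 6 * (ν - 1)) :
    (∫ ω, (Real.log |X ω|) ^ 2) = τ ^ 2 + DV ∧
    (∫ ω, (Real.log |X ω| - τ) ^ 2) = DV := by
  obtain ⟨hXm, hν, hθ, h0, hmom, hφ⟩ := hX
  have hν0 : 0 < ν := by linarith
  set α : ℝ := ν ^ (-(1/2) : ℝ) with hα
  have hαpos : 0 < α := Real.rpow_pos_of_pos hν0 _
  have hα2 : α * Real.sqrt ν = 1 := by
    rw [hα, Real.sqrt_eq_rpow, ← Real.rpow_add hν0]; norm_num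
  have hsq : Real.sqrt ν ^ 2 = ν := Real.sq_sqrt hν0.le
  have hinv : 1/α^2 = ν := by
    rw [← hsq]
    have : Real.sqrt ν = 1/α := by field_simp; linarith
    rw [this]; ring
  have hX0 : ∀ᵐ ω ∂(ℙ : Measure Ω), X ω ≠ 0 := by
    rw [ae_iff]; simpa using h0
  have hLm : Measurable fun ω => Real.log |X ω| := by fun_prop
  have hL1 : Integrable (fun ω => Real.log |X ω|) (ℙ : Measure Ω) := by
    have := hmom 1
    simp only [pow_one] at this
    exact (integrable_norm_iff hLm.aestronglyMeasurable).1 this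
  have hL2 : Integrable (fun ω => Real.log |X ω| ^ 2) (ℙ : Measure Ω) := by
    have := hmom 2
    simpa only [sq_abs] using this
  have hθ1 : |θ| ≤ 1 := hθ.trans (min_le_left _ _)
  have hθ2 : |θ| ≤ 2 * Real.sqrt ν - 1 := hθ.trans (min_le_right _ _)
  suffices h : ∫ ω, (Real.log |X ω| - τ) ∂(ℙ : Measure Ω) = 0 ∧ ∫ ω, (Real.log |X ω| - τ)^2 ∂(ℙ : Measure Ω) = DV by
    refine ⟨?_, h.2⟩
    have i1 : Integrable (fun ω => Real.log |X ω| - τ) (ℙ : Measure Ω) := hL1.sub (integrable_const _)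
    have i2 : Integrable (fun ω => (Real.log |X ω| - τ)^2) (ℙ : Measure Ω) := by
      have : Integrable (fun ω => Real.log |X ω| ^ 2 - 2 * τ * Real.log |X ω| + τ^2) (ℙ : Measure Ω) :=
        (hL2.sub (hL1.const_mul _)).add (integrable_const _)
      refine this.congr (ae_of_all _ fun ω => ?_)
      simp only; ring
    have e : ∀ ω, Real.log |X ω| ^ 2 = (Real.log |X ω| - τ)^2 + 2 * τ * (Real.log |X ω| - τ) + τ^2 := fun ω => by ring
    simp_rw [e]
    have i3 : Integrable (fun ω => (Real.log |X ω| - τ)^2 + 2 * τ * (Real.log |X ω| - τ)) (ℙ : Measure Ω) :=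
      i2.add (i1.const_mul _)
    rw [integral_add i3 (integrable_const _), integral_add i2 (i1.const_mul _), integral_const_mul, h.1, h.2]
    simp
    ring
  have hαθ1 : |α * θ| ≤ α := by
    rw [abs_mul, abs_of_pos hαpos]; nlinarith
  have hαθ2 : |α * θ| ≤ 2 - α := by
    rw [abs_mul, abs_of_pos hαpos]; nlinarith
  rcases lt_or_ge |α * θ| 1 with hlt | hge
  · rw [hDV, ← hinv]
    refine aux_nondeg _ hXm hX0 hαpos hlt hL1 hL2 ?_
    intro k hk
    rw [hφ k hk.ne', Real.sign_of_pos hk, abs_of_pos hk, Real.rpow_def_of_pos hk, Complex.ofReal_exp (Real.log k * α),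
      ← Complex.exp_add]
    congr 3
    push_cast
    ring
  · have hα1 : α = 1 := by linarith
    have hν1 : ν = 1 := by rw [← hinv, hα1]; norm_num
    have hθa : |θ| = 1 := by rw [hα1, one_mul] at hge; linarith
    have hθc : θ = 1 ∨ θ = -1 := eq_or_eq_neg_of_abs_eq hθa
    have hD : DV = 0 := by
      rw [hDV, hν1, ← sq_abs θ, hθa]; ring
    have hae := aux_deg (ℙ : Measure Ω) hXm (θ := θ) (τ := τ) hθc (by
      intro k hk
      rw [hφ k hk, hα1]
      congr 3
      push_cast
      ring)
    constructor
    · rw [integral_eq_zero_of_ae]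
      filter_upwards [hae] with ω hω
      simp [hω]
    · rw [hD, integral_eq_zero_of_ae]
      filter_upwards [hae] with ω hω
      simp [hω]
end
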